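/- Let r ≥ 4 and let p > 3 be prime, and let V be a quasi-Hermitian variety of PG(r,p^4) whose characteristic vector v^V belongs to C_p. Then every plane π of PG(r,p^4) satisfies either |π ∩ V| ≤ p^6 + 2p^4 - p^2 - p + 1 or |π ∩ V| ≥ p^8 - p^5 + p^4 - p + 1. -/

import Mathlib

/-!
Common framework: `ProjPoint F n` is the set of points of the projective space
PG(n-1, |F|) (so PG(r, q²) corresponds to `n = r + 1` and `Fintype.card F = q ^ 2`).
Projective subspaces of projective dimension `k` are the submodules of `Fin n → F`
of `finrank` equal to `k + 1`; lines have finrank 2, planes finrank 3 and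
hyperplanes finrank `n - 1 = r`.
-/

open Module Matrix

/-- The points of the projective space PG(n-1, |F|): one-dimensional subspaces
of `F^n`. -/
def ProjPoint (F : Type) [Field F] (n : ℕ) : Type :=
  {W : Submodule F (Fin n → F) // finrank F W = 1}

/-- The set of projective points lying in a given subspace `W`. -/
def pointsIn (F : Type) [Field F] (n : ℕ) (W : Submodule F (Fin n → F)) :
    Set (ProjPoint F n) :=
  {P | P.1 ≤ W}

/-- The number of points of `V` lying in the subspace `W`. -/
noncomputable def secant (F : Type) [Field F] (n : ℕ) (V : Set (ProjPoint F n))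
    (W : Submodule F (Fin n → F)) : ℕ :=
  (V ∩ pointsIn F n W).ncard

/-- The characteristic vector of a set of projective points, with values in `F_p`. -/
noncomputable def charVec (F : Type) [Field F] (p n : ℕ) (S : Set (ProjPoint F n)) :
    ProjPoint F n → ZMod p :=
  Set.indicator S 1

/-- `C_p`: the `F_p`-code spanned by the characteristic vectors of hyperplanes. -/
def hypCode (F : Type) [Field F] (p n : ℕ) :
    Submodule (ZMod p) (ProjPoint F n → ZMod p) :=
  Submodule.span (ZMod p)
    {v | ∃ H : Submodule F (Fin n → F), finrank F H = n - 1 ∧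
      v = charVec F p n (pointsIn F n H)}

/-- A quasi-Hermitian variety of PG(r, q²): it has the size of a non-singular
Hermitian variety and the same two intersection numbers with hyperplanes.
(All identities are stated multiplied through by `q² - 1`.) -/
def IsQuasiHermitian (F : Type) [Field F] (q r : ℕ)
    (V : Set (ProjPoint F (r + 1))) : Prop :=
  (V.ncard : ℤ) * ((q : ℤ) ^ 2 - 1)
      = ((q : ℤ) ^ (r + 1) + (-1) ^ r) * ((q : ℤ) ^ r - (-1) ^ r) ∧
  ∀ H : Submodule F (Fin (r + 1) → F), finrank F H = r →
    ((secant F (r + 1) V H : ℤ) * ((q : ℤ) ^ 2 - 1)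
        = ((q : ℤ) ^ r + (-1) ^ (r - 1)) * ((q : ℤ) ^ (r - 1) - (-1) ^ (r - 1)) ∨
     (secant F (r + 1) V H : ℤ) * ((q : ℤ) ^ 2 - 1)
        = ((q : ℤ) ^ 2 - 1)
          + (q : ℤ) ^ 2 * (((q : ℤ) ^ (r - 1) + (-1) ^ r) * ((q : ℤ) ^ (r - 2) - (-1) ^ r)))

/-- The zero set, in PG(n-1,|F|), of the Hermitian form `x ↦ xᵀ A x^(q)`. -/
def hermSet (F : Type) [Field F] (q n : ℕ) (A : Matrix (Fin n) (Fin n) F) :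
    Set (ProjPoint F n) :=
  {P | ∀ x ∈ P.1, ∑ i, ∑ j, x i * A i j * (x j) ^ q = 0}

/-- A non-singular Hermitian variety of PG(n-1, q²). -/
def IsNonsingHermitian (F : Type) [Field F] (q n : ℕ)
    (V : Set (ProjPoint F n)) : Prop :=
  ∃ A : Matrix (Fin n) (Fin n) F, IsUnit A.det ∧
    Aᵀ = A.map (fun a => a ^ q) ∧ V = hermSet F q n A

/-- A singular Hermitian variety of PG(n-1, q²) whose singular space (the radical
of the Hermitian form) has projective dimension `d`. -/
def IsSingularHermitian (F : Type) [Field F] (q n d : ℕ)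
    (S : Set (ProjPoint F n)) : Prop :=
  ∃ A : Matrix (Fin n) (Fin n) F,
    Aᵀ = A.map (fun a => a ^ q) ∧
    finrank F (LinearMap.ker (Matrix.toLin' Aᵀ)) = d + 1 ∧
    S = hermSet F q n A

/-- A `d`-singular quasi-Hermitian variety of PG(r, q²). -/
def IsSingularQuasiHermitian (F : Type) [Field F] (q r d : ℕ)
    (S : Set (ProjPoint F (r + 1))) : Prop :=
  ∃ S₀ : Set (ProjPoint F (r + 1)), IsSingularHermitian F q (r + 1) d S₀ ∧
    S.ncard = S₀.ncard ∧
    ∀ H : Submodule F (Fin (r + 1) → F), finrank F H = r →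
      ∃ H₀ : Submodule F (Fin (r + 1) → F), finrank F H₀ = r ∧
        secant F (r + 1) S H = secant F (r + 1) S₀ H₀

/-- `U` is a classical unital (Hermitian curve) of the plane `π` of PG(n-1, q²):
in some coordinatization `e` of `π`, it is the zero set of a non-degenerate
Hermitian form on `F³`. -/
def IsClassicalUnital (F : Type) [Field F] (q n : ℕ)
    (π : Submodule F (Fin n → F)) (U : Set (ProjPoint F n)) : Prop :=
  ∃ e : (Fin 3 → F) →ₗ[F] (Fin n → F), LinearMap.ker e = ⊥ ∧ LinearMap.range e = π ∧
    ∃ A : Matrix (Fin 3) (Fin 3) F, IsUnit A.det ∧ Aᵀ = A.map (fun a => a ^ q) ∧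
      U = {P | ∃ y : Fin 3 → F, y ≠ 0 ∧ P.1 = Submodule.span F {e y} ∧
        ∑ i, ∑ j, y i * A i j * (y j) ^ q = 0}

/-!
A word `c` of the code `C_p` has polynomial moments: in affine coordinates `(x, y)` on a plane,
the sum `∑ x, x ^ i * c (x, y)` is a polynomial in `y` of degree at most `i`. Minors of the Hankel
matrix of these moments detect the number of nonzero `c (x, y)` on the line with parameter `y`,
and bounding the degree of a minor bounds the weight: a line meeting the support of `c` in `s`
points lies only in planes with at least `s * (|F| + 1 - s)` support points (Szőnyi and Weiner).

All line intersection numbers of `V` are `1` modulo `p`, and averaging over the planes through a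
line `l` produces one with at most `p ^ 6` points of `V` off `l`. The weight bound in that plane
gives `|l ∩ V| ≤ p ^ 2 + 1` or `|l ∩ V| ≥ p ^ 4 + 1 - p ^ 2`. Subtracting the long lines of the
plane from the word of `V` and applying the bound again sharpens the second case to
`|l ∩ V| ≥ p ^ 4 + 1 - p`. With `a` and `b` the two line bounds, every line of a plane satisfies
`(|l ∩ V| - a) * (|l ∩ V| - b) ≥ 0`; summing over the lines gives a quadratic inequality for
`|π ∩ V|` that excludes the open interval of the theorem.
-/

section HankelDeterminants

open Polynomial Finset

theorem pow_card_dvd_det {n R : Type*} [Fintype n] [DecidableEq n] [CommRing R]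
    {M : Matrix n n R} {a : R} (S : Finset n) (h : ∀ i, ∀ j ∈ S, a ∣ M i j) :
    a ^ #S ∣ M.det := by
  rw [det_apply]
  refine dvd_sum fun σ _ => ?_
  rw [Units.smul_def, zsmul_eq_mul]
  refine Dvd.dvd.mul_left ?_ _
  calc a ^ #S = ∏ _j ∈ S, a := (prod_const a).symm
    _ ∣ ∏ j ∈ S, M (σ j) j := prod_dvd_prod_of_dvd _ _ fun j hj => h _ j hj
    _ ∣ ∏ j, M (σ j) j := prod_dvd_prod_of_subset _ _ _ (subset_univ S)

theorem X_sub_C_pow_corank_dvd_det {n F : Type*} [Fintype n] [DecidableEq n] [Field F]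
    (M : Matrix n n F[X]) (y : F) :
    (X - C y) ^ (Fintype.card n - (M.map (eval y)).rank) ∣ M.det := by
  classical
  obtain ⟨U, W, D, hD⟩ :=
    Pivot.exists_list_transvec_mul_mul_list_transvec_eq_diagonal (M.map (eval y))
  set P := (U.map TransvectionStruct.toMatrix).prod
  set Q := (W.map TransvectionStruct.toMatrix).prod
  have hP : P.det = 1 := TransvectionStruct.det_toMatrix_prod U
  have hQ : Q.det = 1 := TransvectionStruct.det_toMatrix_prod W
  set N := C.mapMatrix P * M * C.mapMatrix Q with hN
  have hdet : N.det = M.det := by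
    rw [hN, det_mul, det_mul, ← RingHom.map_det, ← RingHom.map_det, hP, hQ, map_one, one_mul,
      mul_one]
  have heval : (evalRingHom y).mapMatrix N = diagonal D := by
    have hC (A : Matrix n n F) : (evalRingHom y).mapMatrix (C.mapMatrix A) = A := by
      ext; simp
    rw [hN, map_mul, map_mul, hC, hC]
    exact hD
  have hrank : (M.map (eval y)).rank = Fintype.card {i // D i ≠ 0} := by
    rw [← rank_diagonal, ← hD, rank_mul_eq_left_of_isUnit_det _ _ (by simp [hQ]),
      rank_mul_eq_right_of_isUnit_det _ _ (by simp [hP])]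
  have hcard : Fintype.card n - (M.map (eval y)).rank = #{i | D i = 0} := by
    rw [hrank, Fintype.card_subtype, ← card_univ,
      ← card_filter_add_card_filter_not (s := univ) (fun i => D i = 0), Nat.add_sub_cancel]
  rw [hcard, ← hdet]
  refine pow_card_dvd_det _ fun i j hj => dvd_iff_isRoot.2 ?_
  obtain hij : eval y (N i j) = diagonal D i j := congrFun (congrFun heval i) j
  rw [IsRoot, hij, diagonal_apply]
  split_ifs with h
  · exact h ▸ (mem_filter.1 hj).2
  · rfl

/-- The `s × s` Hankel matrix `(μ (i + j))` of the sequence `μ`. -/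
def hankelMatrix {R : Type*} (s : ℕ) (μ : ℕ → R) : Matrix (Fin s) (Fin s) R :=
  of fun i j => μ (i + j)

theorem natDegree_det_hankelMatrix_le {R : Type*} [CommRing R] (s : ℕ) {μ : ℕ → R[X]}
    (hμ : ∀ i, (μ i).natDegree ≤ i) : (hankelMatrix s μ).det.natDegree ≤ s * (s - 1) := by
  rw [det_apply]
  refine natDegree_sum_le_of_forall_le _ _ fun σ _ =>
    (natDegree_smul_le _ _).trans <| (natDegree_prod_le _ _).trans ?_
  calc ∑ i, (hankelMatrix s μ (σ i) i).natDegree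
      ≤ ∑ i, ((σ i : ℕ) + i) := sum_le_sum fun i _ => hμ _
    _ = ∑ i : Fin s, (i : ℕ) + ∑ i : Fin s, (i : ℕ) := by
      rw [sum_add_distrib, Equiv.sum_comp σ (fun i => (i : ℕ))]
    _ = s * (s - 1) := by
      rw [Fin.sum_univ_eq_sum_range (fun i => i), ← sum_range_id_mul_two, mul_two]

theorem hankelMatrix_moments_eq_mul {ι R : Type*} [Fintype ι] [DecidableEq ι] [CommRing R]
    (s : ℕ) (v w : ι → R) :
    hankelMatrix s (fun i => ∑ k, v k ^ i * w k) =
      (of fun k (j : Fin s) => v k ^ (j : ℕ))ᵀ * diagonal w *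
        of fun k (j : Fin s) => v k ^ (j : ℕ) := by
  ext i j
  rw [Matrix.mul_apply]
  refine sum_congr rfl fun k _ => ?_
  rw [mul_diagonal, transpose_apply, of_apply, of_apply, pow_add, mul_right_comm]

theorem rank_hankelMatrix_moments_le {ι F : Type*} [Fintype ι] [Field F]
    (s : ℕ) (v w : ι → F) :
    (hankelMatrix s fun i => ∑ k, v k ^ i * w k).rank ≤ Fintype.card ι := by
  classical
  rw [hankelMatrix_moments_eq_mul]
  exact (rank_mul_le_left _ _).trans (rank_le_card_width _)

theorem det_hankelMatrix_moments_ne_zero {ι F : Type*} [Fintype ι] [Field F]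
    {v w : ι → F} (hv : Function.Injective v) (hw : ∀ k, w k ≠ 0) :
    (hankelMatrix (Fintype.card ι) fun i => ∑ k, v k ^ i * w k).det ≠ 0 := by
  classical
  let e := Fintype.equivFin ι
  have hreindex (i : ℕ) :
      ∑ k, v k ^ i * w k = ∑ k, (v ∘ e.symm) k ^ i * (w ∘ e.symm) k :=
    (Equiv.sum_comp e.symm fun k => v k ^ i * w k).symm
  have hdet : (vandermonde (v ∘ e.symm)).det ≠ 0 :=
    det_vandermonde_ne_zero_iff.2 (hv.comp e.symm.injective)
  simp only [hreindex]
  rw [hankelMatrix_moments_eq_mul, det_mul, det_mul, det_transpose, det_diagonal]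
  exact mul_ne_zero (mul_ne_zero hdet (prod_ne_zero_iff.2 fun k _ => hw _)) hdet

theorem sum_rootMultiplicity_le_natDegree {F : Type*} [Field F] [Fintype F] (f : F[X]) :
    ∑ y, f.rootMultiplicity y ≤ f.natDegree := by
  classical
  calc ∑ y, f.rootMultiplicity y = ∑ y, f.roots.count y := by simp only [count_roots]
    _ = f.roots.card := Multiset.sum_count_eq_card fun y _ => mem_univ y
    _ ≤ f.natDegree := card_roots' f

/-- The zero locus in `y` of the Hankel determinant of the moments of `x ↦ h x y` is small because
the determinant has degree at most `s * (s - 1)`, while `y` is a root of multiplicity at least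
`s` minus the number of `x` with `h x y ≠ 0`. -/
theorem card_mul_le_sum_card_add_of_moments {F : Type*} [Field F] [Fintype F] [DecidableEq F]
    {h : F → F → F} {μ : ℕ → F[X]} (hdeg : ∀ i, (μ i).natDegree ≤ i)
    (hμ : ∀ i y, (μ i).eval y = ∑ x, x ^ i * h x y) (y₀ : F) :
    Fintype.card F * #{x | h x y₀ ≠ 0} ≤
      ∑ y, #{x | h x y ≠ 0} + #{x | h x y₀ ≠ 0} * (#{x | h x y₀ ≠ 0} - 1) := by
  set s := #{x | h x y₀ ≠ 0} with hs
  have heval (y : F) : (hankelMatrix s μ).map (eval y) =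
      hankelMatrix s fun i => ∑ k : {x // h x y ≠ 0}, (k : F) ^ i * h k y := by
    ext i j
    refine (hμ _ y).trans ?_
    rw [← sum_filter_of_ne fun x _ hx => right_ne_zero_of_mul hx]
    exact sum_subtype _ (fun x => by simp only [mem_filter_univ]) _
  have hdet : (hankelMatrix s μ).det ≠ 0 := by
    intro h0
    have hmap : ((hankelMatrix s μ).map (eval y₀)).det = 0 := by
      rw [← coe_evalRingHom, ← RingHom.mapMatrix_apply, ← RingHom.map_det, h0, map_zero]
    rw [heval, hs, ← Fintype.card_subtype] at hmap
    exact det_hankelMatrix_moments_ne_zero Subtype.val_injective (fun k => k.2) hmap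
  have hmult (y : F) :
      s ≤ #{x | h x y ≠ 0} + (hankelMatrix s μ).det.rootMultiplicity y := by
    have hrank : ((hankelMatrix s μ).map (eval y)).rank ≤ #{x | h x y ≠ 0} := by
      rw [heval, ← Fintype.card_subtype]
      exact rank_hankelMatrix_moments_le _ _ _
    have hdvd := (le_rootMultiplicity_iff hdet).2 (X_sub_C_pow_corank_dvd_det _ y)
    rw [Fintype.card_fin] at hdvd
    omega
  calc Fintype.card F * s = ∑ _y : F, s := by simp
    _ ≤ ∑ y, (#{x | h x y ≠ 0} + (hankelMatrix s μ).det.rootMultiplicity y) :=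
      sum_le_sum fun y _ => hmult y
    _ ≤ _ := by
      rw [sum_add_distrib]
      gcongr
      exact (sum_rootMultiplicity_le_natDegree _).trans (natDegree_det_hankelMatrix_le s hdeg)

end HankelDeterminants

section ProjectivePlane

open Finset Configuration ProjectivePlane
open scoped Classical

variable {P L : Type*} [Membership P L]

/-- The number of points of `B` incident with the line `l`. -/
noncomputable def lineCard (B : Finset P) (l : L) : ℕ := #{x ∈ B | x ∈ l}

section Nondegenerate

variable [Nondegenerate P L] [Fintype P]

theorem card_mem_inter_le_one {l m : L} (hlm : l ≠ m) : #{x : P | x ∈ l ∧ x ∈ m} ≤ 1 := by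
  refine card_le_one.2 fun x hx y hy => ?_
  rw [mem_filter_univ] at hx hy
  exact (Nondegenerate.eq_or_eq hx.1 hy.1 hx.2 hy.2).resolve_right hlm

theorem card_mem_meeting_le {K : Finset L} {l : L} (hl : l ∉ K) :
    #{x : P | x ∈ l ∧ ∃ m ∈ K, x ∈ m} ≤ #K := by
  have hunion : ({x : P | x ∈ l ∧ ∃ m ∈ K, x ∈ m} : Finset P) =
      K.biUnion fun m => {x | x ∈ l ∧ x ∈ m} := by
    ext x
    simp only [mem_filter_univ, mem_biUnion]
    tauto
  rw [hunion]
  simpa using card_biUnion_le_card_mul K _ 1 fun m hm =>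
    card_mem_inter_le_one (ne_of_mem_of_not_mem hm hl).symm

theorem lineCard_le_card_avoiding_add (B : Finset P) {K : Finset L} {l : L} (hl : l ∉ K) :
    lineCard B l ≤ #{x ∈ B | x ∈ l ∧ ¬ ∃ m ∈ K, x ∈ m} + #K := by
  refine le_trans (card_le_card fun x hx => ?_) <|
    (card_union_le _ {x | x ∈ l ∧ ∃ m ∈ K, x ∈ m}).trans
      (Nat.add_le_add_left (card_mem_meeting_le hl) _)
  simp only [mem_filter, mem_union, mem_univ, true_and] at hx ⊢
  tauto

theorem card_mul_le_card_covered_add_sq {B : Finset P} {a : ℕ} {K : Finset L}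
    (hK : ∀ l ∈ K, a ≤ lineCard B l) : #K * a ≤ #{x ∈ B | ∃ l ∈ K, x ∈ l} + #K ^ 2 := by
  induction K using Finset.induction_on with
  | empty => simp
  | insert l K hl ih =>
    have ih := ih fun m hm => hK m (mem_insert_of_mem hm)
    have hnew := (hK l (mem_insert_self l K)).trans (lineCard_le_card_avoiding_add B hl)
    have hcovered : #{x ∈ B | ∃ m ∈ insert l K, x ∈ m} =
        #{x ∈ B | ∃ m ∈ K, x ∈ m} + #{x ∈ B | x ∈ l ∧ ¬ ∃ m ∈ K, x ∈ m} := by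
      rw [← card_union_of_disjoint]
      · congr 1
        ext x
        rw [mem_union, mem_filter, mem_filter, mem_filter, exists_mem_insert]
        by_cases hx : ∃ m ∈ K, x ∈ m <;> simp only [hx] <;> tauto
      · exact disjoint_filter.2 fun x _ hx hx' => hx'.2 hx
    rw [card_insert_of_notMem hl, hcovered]
    nlinarith

end Nondegenerate

variable (L) in
theorem card_lines_through_two [HasLines P L] [Fintype L] {x y : P} (hxy : x ≠ y) :
    #{l : L | x ∈ l ∧ y ∈ l} = 1 := by
  obtain ⟨l, hl, huniq⟩ := HasLines.existsUnique_line P L x y hxy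
  refine card_eq_one.2 ⟨l, ext fun m => ?_⟩
  rw [mem_filter_univ, mem_singleton]
  exact ⟨huniq m, fun hm => hm ▸ hl⟩

variable [Fintype P] [Fintype L] [ProjectivePlane P L]

variable (P) in
theorem card_points_on_line (l : L) : #{x : P | x ∈ l} = order P L + 1 := by
  rw [← pointCount_eq P l, pointCount, Nat.card_eq_fintype_card, Fintype.card_subtype]

variable (L) in
theorem card_lines_through (x : P) : #{l : L | x ∈ l} = order P L + 1 := by
  rw [← lineCount_eq L x, lineCount, Nat.card_eq_fintype_card, Fintype.card_subtype]

theorem card_notMem_on_line_add_lineCard (B : Finset P) (l : L) :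
    #{x | x ∈ l ∧ x ∉ B} + lineCard B l = order P L + 1 := by
  have hB : {x ∈ B | x ∈ l} = ({x | x ∈ l ∧ x ∈ B} : Finset P) := by
    ext x
    simp only [mem_filter, mem_univ, true_and, and_comm]
  rw [← card_points_on_line P l, ← card_filter_add_card_filter_not (s := {x | x ∈ l}) (· ∈ B),
    add_comm, filter_filter, filter_filter, lineCard, hB]

variable (L) in
theorem sum_lineCard_through (B : Finset P) (x : P) :
    ∑ l : L with x ∈ l, lineCard B l = #B + if x ∈ B then order P L else 0 := by
  have hline (y : P) :
      #{l : L | x ∈ l ∧ y ∈ l} = 1 + if x = y then order P L else 0 := by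
    split_ifs with h
    · simp only [h, and_self, card_lines_through, add_comm]
    · exact card_lines_through_two L h
  calc ∑ l : L with x ∈ l, lineCard B l
      = ∑ y ∈ B, #{l ∈ ({l : L | x ∈ l} : Finset L) | y ∈ l} :=
        sum_card_bipartiteAbove_eq_sum_card_bipartiteBelow fun l y => y ∈ l
    _ = ∑ y ∈ B, (1 + if x = y then order P L else 0) :=
        sum_congr rfl fun y _ => by rw [filter_filter, hline]
    _ = #B + if x ∈ B then order P L else 0 := by
        rw [sum_add_distrib, sum_ite_eq, card_eq_sum_ones]

variable (L) in
theorem sum_lineCard (B : Finset P) : ∑ l : L, lineCard B l = #B * (order P L + 1) := by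
  calc ∑ l : L, lineCard B l = ∑ x ∈ B, #{l : L | x ∈ l} :=
        sum_card_bipartiteAbove_eq_sum_card_bipartiteBelow fun l x => x ∈ l
    _ = #B * (order P L + 1) := by simp only [card_lines_through, sum_const, smul_eq_mul]

variable (L) in
theorem sum_lineCard_sq (B : Finset P) :
    ∑ l : L, lineCard B l ^ 2 = #B * (#B + order P L) := by
  calc ∑ l : L, lineCard B l ^ 2 = ∑ l : L, ∑ x ∈ B with x ∈ l, lineCard B l :=
        sum_congr rfl fun l _ => by rw [sum_const, smul_eq_mul, sq]; rfl
    _ = ∑ x ∈ B, ∑ l : L with x ∈ l, lineCard B l := by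
        simp only [sum_filter]
        exact sum_comm
    _ = ∑ _x ∈ B, (#B + order P L) :=
        sum_congr rfl fun x hx => by rw [sum_lineCard_through, if_pos hx]
    _ = #B * (#B + order P L) := by rw [sum_const, smul_eq_mul]

/-- Sum `(t - a) * (t - b) ≥ 0` over the intersection numbers `t` of `B` with all lines. -/
theorem quadratic_nonneg_of_lineCard_gap {B : Finset P} {a b : ℤ} (hab : a ≤ b)
    (hgap : ∀ l : L, (lineCard B l : ℤ) ≤ a ∨ b ≤ lineCard B l) :
    0 ≤ (#B : ℤ) * (#B + order P L) - (a + b) * (#B * (order P L + 1))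
      + a * b * (order P L ^ 2 + order P L + 1) := by
  have hlin : ∑ l : L, (lineCard B l : ℤ) = #B * (order P L + 1) := mod_cast sum_lineCard L B
  have hsq : ∑ l : L, (lineCard B l : ℤ) ^ 2 = #B * (#B + order P L) :=
    mod_cast sum_lineCard_sq L B
  have hcard : (Fintype.card L : ℤ) = order P L ^ 2 + order P L + 1 := mod_cast card_lines P L
  calc 0 ≤ ∑ l : L, ((lineCard B l : ℤ) - a) * (lineCard B l - b) := by
        refine sum_nonneg fun l _ => ?_
        rcases hgap l with h | h
        · exact mul_nonneg_of_nonpos_of_nonpos (by linarith) (by linarith)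
        · exact mul_nonneg (by linarith) (by linarith)
    _ = ∑ l : L, ((lineCard B l : ℤ) ^ 2 - (a + b) * lineCard B l + a * b) :=
        sum_congr rfl fun l _ => by ring
    _ = _ := by
        rw [sum_add_distrib, sum_sub_distrib, ← mul_sum, hlin, hsq, sum_const, card_univ,
          nsmul_eq_mul, hcard, mul_comm (a * b)]

theorem exists_mem_notMem_card_through_lt {B : Finset P} {l₀ : L} {K : Finset L} {a : ℕ}
    (hl₀ : l₀ ∉ K) (hK : #K < (order P L + 1 - lineCard B l₀) * a) :
    ∃ x ∈ l₀, x ∉ B ∧ #{l ∈ K | x ∈ l} < a := by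
  by_contra! hmany
  set S : Finset P := {x | x ∈ l₀ ∧ x ∉ B}
  have hS : #S = order P L + 1 - lineCard B l₀ :=
    Nat.eq_sub_of_add_eq (card_notMem_on_line_add_lineCard B l₀)
  refine hK.not_ge ?_
  calc (order P L + 1 - lineCard B l₀) * a = #S • a := by rw [hS, smul_eq_mul]
    _ ≤ ∑ x ∈ S, #{l ∈ K | x ∈ l} := card_nsmul_le_sum S _ _ fun x hx =>
        hmany x (mem_filter.1 hx).2.1 (mem_filter.1 hx).2.2
    _ = ∑ l ∈ K, #{x ∈ S | x ∈ l} :=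
        sum_card_bipartiteAbove_eq_sum_card_bipartiteBelow fun x l => x ∈ l
    _ ≤ #K • 1 := sum_le_card_nsmul K _ _ fun l hl => by
        refine (card_le_card fun x hx => ?_).trans
          (card_mem_inter_le_one (P := P) (ne_of_mem_of_not_mem hl hl₀).symm)
        simp only [S, mem_filter, mem_univ, true_and] at hx ⊢
        exact ⟨hx.1.1, hx.2⟩
    _ = #K := by rw [smul_eq_mul, mul_one]

theorem card_le_of_lineCard_through_le {B : Finset P} {x : P} (hxB : x ∉ B) {l₀ : L} (hx : x ∈ l₀)
    {K : Finset L} {a : ℕ} (ha : a ≤ order P L + 1)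
    (hshort : ∀ l, x ∈ l → l ≠ l₀ → l ∉ K → lineCard B l ≤ a) :
    #B ≤ lineCard B l₀ + order P L * a + #{l ∈ K | x ∈ l} * (order P L + 1 - a) := by
  set S : Finset L := ({l | x ∈ l} : Finset L).erase l₀
  have hl₀ : l₀ ∈ ({l | x ∈ l} : Finset L) := (mem_filter_univ l₀).2 hx
  have hS : #S = order P L := by
    rw [card_erase_of_mem hl₀, card_lines_through, Nat.add_sub_cancel]
  calc #B = ∑ l : L with x ∈ l, lineCard B l := by
        rw [sum_lineCard_through, if_neg hxB, add_zero]
    _ = lineCard B l₀ + ∑ l ∈ S, lineCard B l := (add_sum_erase _ _ hl₀).symm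
    _ ≤ lineCard B l₀ + ∑ l ∈ S, (a + if l ∈ K then order P L + 1 - a else 0) := by
        gcongr with l hl
        obtain ⟨hne, hxl⟩ := mem_erase.1 hl
        split_ifs with hlK
        · have := card_notMem_on_line_add_lineCard B l
          omega
        · exact hshort l ((mem_filter_univ l).1 hxl) hne hlK
    _ = lineCard B l₀ + order P L * a + #{l ∈ S | l ∈ K} * (order P L + 1 - a) := by
        rw [sum_add_distrib, sum_const, hS, ← sum_filter, sum_const, smul_eq_mul, smul_eq_mul,
          add_assoc]
    _ ≤ _ := by
        gcongr
        intro l hl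
        simp only [S, mem_filter, mem_erase, mem_univ, true_and] at hl ⊢
        exact ⟨hl.2, hl.1.2⟩

end ProjectivePlane

section LineCodes

open Finset Configuration ProjectivePlane
open scoped Classical

variable {P L : Type*} [Membership P L] {p : ℕ}

/-- The word `χ_B - ∑ l ∈ K, χ_l` over `F_p`. -/
noncomputable def residualWord (p : ℕ) (B : Finset P) (K : Finset L) : P → ZMod p := fun x =>
  (if x ∈ B then 1 else 0) - (#{l ∈ K | x ∈ l} : ZMod p)

variable {B : Finset P} {K : Finset L} {l : L} {x : P}

theorem residualWord_of_forall_notMem (hx : ¬ ∃ l ∈ K, x ∈ l) :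
    residualWord p B K x = if x ∈ B then 1 else 0 := by
  have hK : ({l ∈ K | x ∈ l} : Finset L) = ∅ :=
    filter_eq_empty_iff.2 fun l hl hxl => hx ⟨l, hl, hxl⟩
  rw [residualWord, hK, card_empty, Nat.cast_zero, sub_zero]

theorem residualWord_insert_of_notMem (hx : x ∉ l) :
    residualWord p B (insert l K) x = residualWord p B K x := by
  rw [residualWord, filter_insert, if_neg hx, residualWord]

theorem residualWord_insert_of_mem (hl : l ∉ K) (hx : x ∈ l) :
    residualWord p B (insert l K) x = residualWord p B K x - 1 := by
  rw [residualWord, filter_insert, if_pos hx, card_insert_of_notMem (by simp [hl]), Nat.cast_succ,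
    ← sub_sub, residualWord]

theorem residualWord_ne_zero_of_notMem (hxB : x ∉ B) (hpos : 0 < #{l ∈ K | x ∈ l})
    (hlt : #{l ∈ K | x ∈ l} < p) : residualWord p B K x ≠ 0 := by
  rw [residualWord, if_neg hxB, zero_sub, neg_ne_zero, Ne, ZMod.natCast_eq_zero_iff]
  exact Nat.not_dvd_of_pos_of_lt hpos hlt

variable [Fintype P]

/-- The support of a word `c` as a finset; its cardinality is the weight of `c`. -/
noncomputable def wordSupport {R : Type*} [Zero R] (c : P → R) : Finset P := {x | c x ≠ 0}

theorem mem_wordSupport {R : Type*} [Zero R] {c : P → R} {x : P} :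
    x ∈ wordSupport c ↔ c x ≠ 0 :=
  mem_filter_univ x

theorem wordSupport_residualWord_empty [Nontrivial (ZMod p)] (B : Finset P) :
    wordSupport (residualWord p B (∅ : Finset L)) = B := by
  ext x
  simp [mem_wordSupport, residualWord]

section Nondegenerate

variable [Nondegenerate P L]

theorem lineCard_wordSupport_residualWord_le_of_notMem (hl : l ∉ K) :
    lineCard (wordSupport (residualWord p B K)) l ≤ lineCard B l + #K := by
  refine (card_le_card fun x hx => ?_).trans <|
    (card_union_le _ {x | x ∈ l ∧ ∃ m ∈ K, x ∈ m}).trans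
      (Nat.add_le_add_left (card_mem_meeting_le hl) _)
  obtain ⟨hne, hxl⟩ := mem_filter.1 hx
  rw [mem_wordSupport] at hne
  by_cases hK : ∃ m ∈ K, x ∈ m
  · exact mem_union_right _ ((mem_filter_univ x).2 ⟨hxl, hK⟩)
  · rw [residualWord_of_forall_notMem hK] at hne
    exact mem_union_left _ (mem_filter.2 ⟨by_contra fun hB => hne (if_neg hB), hxl⟩)

theorem lineCard_wordSupport_residualWord_singleton [Nontrivial (ZMod p)] {l₀ : L} (hl : l ≠ l₀)
    (hx : x ∈ l₀) (hxl : x ∈ l) (hxB : x ∉ B) :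
    lineCard (wordSupport (residualWord p B {l₀})) l = lineCard B l + 1 := by
  have hinsert : {y ∈ wordSupport (residualWord p B {l₀}) | y ∈ l} =
      insert x ({y ∈ B | y ∈ l} : Finset P) := by
    ext y
    rw [mem_insert, mem_filter, mem_filter, mem_wordSupport]
    rcases eq_or_ne y x with rfl | hyx
    · simp [residualWord, filter_singleton, hx, hxl, hxB]
    · have hy : y ∈ l → y ∉ l₀ := fun h h₀ =>
        hyx ((Nondegenerate.eq_or_eq h hxl h₀ hx).resolve_right hl)
      by_cases hyl : y ∈ l
      · simp [residualWord, filter_singleton, hy hyl, hyx]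
      · simp [hyl, hyx]
  rw [lineCard, hinsert, card_insert_of_notMem (by simp [hxB]), lineCard]

end Nondegenerate

variable [Fintype L] [ProjectivePlane P L]

theorem lineCard_wordSupport_residualWord_insert_add_le (hl : l ∉ K) :
    lineCard (wordSupport (residualWord p B (insert l K))) l + lineCard B l
      ≤ order P L + 1 + #K := by
  have hsub : {x ∈ wordSupport (residualWord p B (insert l K)) | x ∈ l} ⊆
      ({x | x ∈ l ∧ x ∉ B} : Finset P) ∪ ({x | x ∈ l ∧ ∃ m ∈ K, x ∈ m} : Finset P) := fun x hx => by
    obtain ⟨hne, hxl⟩ := mem_filter.1 hx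
    rw [mem_wordSupport, residualWord_insert_of_mem hl hxl] at hne
    by_cases hK : ∃ m ∈ K, x ∈ m
    · exact mem_union_right _ ((mem_filter_univ x).2 ⟨hxl, hK⟩)
    · refine mem_union_left _ ((mem_filter_univ x).2 ⟨hxl, fun hB => hne ?_⟩)
      rw [residualWord_of_forall_notMem hK, if_pos hB, sub_self]
  have hcard := (card_le_card hsub).trans (card_union_le _ _)
  have hmeet := card_mem_meeting_le (P := P) hl
  have hout := card_notMem_on_line_add_lineCard B l
  rw [lineCard]
  omega

/-- The new word vanishes at all points of `B ∩ l` off the lines of `K`, where the old one is `1`;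
off `l` the two words agree. -/
theorem card_wordSupport_residualWord_insert_add_le [Nontrivial (ZMod p)] (hl : l ∉ K) :
    #(wordSupport (residualWord p B (insert l K))) + 2 * lineCard B l ≤
      #(wordSupport (residualWord p B K)) + (order P L + 1) + 2 * #K := by
  set S := wordSupport (residualWord p B K)
  set S' := wordSupport (residualWord p B (insert l K))
  have hon : #{x ∈ S' | x ∈ l} + lineCard B l ≤ order P L + 1 + #K :=
    lineCard_wordSupport_residualWord_insert_add_le hl
  have hoff : ({x ∈ S' | x ∉ l} : Finset P) = {x ∈ S | x ∉ l} := by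
    ext x
    simp only [S, S', mem_filter, mem_wordSupport]
    exact and_congr_left fun hx => by rw [residualWord_insert_of_notMem hx]
  have hold : lineCard B l ≤ #{x ∈ S | x ∈ l} + #K := by
    refine (lineCard_le_card_avoiding_add B hl).trans (Nat.add_le_add_right (card_le_card ?_) _)
    intro x hx
    obtain ⟨hB, hxl, hK⟩ := mem_filter.1 hx
    refine mem_filter.2 ⟨mem_wordSupport.2 ?_, hxl⟩
    rw [residualWord_of_forall_notMem hK, if_pos hB]
    exact one_ne_zero
  have hS := card_filter_add_card_filter_not (s := S) (· ∈ l)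
  have hS' := card_filter_add_card_filter_not (s := S') (· ∈ l)
  rw [hoff] at hS'
  omega

theorem exists_lt_lineCard_wordSupport {R : Type*} [Zero R] {c : P → R} {q : ℕ}
    (hq : q ^ 2 ≤ order P L)
    (hsecant : ∀ l : L, lineCard (wordSupport c) l * (order P L + 1 - lineCard (wordSupport c) l)
      ≤ #(wordSupport c))
    (hweight : #(wordSupport c) < q * (order P L + 1 - q)) {x : P} (hx : c x ≠ 0) :
    ∃ l : L, order P L + 1 - q < lineCard (wordSupport c) l := by
  by_contra! hshort
  have hne : ({l | x ∈ l} : Finset L).Nonempty := by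
    rw [← card_pos, card_lines_through]
    exact Nat.succ_pos _
  obtain ⟨l, -, hmax⟩ := exists_max_image _ (lineCard (wordSupport c)) hne
  have hsum : #(wordSupport c) + order P L ≤ (order P L + 1) * lineCard (wordSupport c) l := by
    calc #(wordSupport c) + order P L = ∑ m : L with x ∈ m, lineCard (wordSupport c) m := by
          rw [sum_lineCard_through, if_pos (mem_wordSupport.2 hx)]
      _ ≤ #{m : L | x ∈ m} • lineCard (wordSupport c) l := sum_le_card_nsmul _ _ _ hmax
      _ = _ := by rw [card_lines_through, smul_eq_mul]
  specialize hsecant l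
  specialize hshort l
  set t := lineCard (wordSupport c) l
  obtain ⟨u, hu⟩ : ∃ u, order P L + 1 = t + u := Nat.exists_eq_add_of_le (by omega)
  rw [hu] at hsecant hweight hsum hshort
  rw [Nat.add_sub_cancel_left] at hsecant
  rcases le_or_gt q t with hqt | htq
  · obtain ⟨a, ha⟩ := Nat.exists_eq_add_of_le hqt
    have hqu : q ≤ u := by omega
    rw [ha, show q + a + u - q = a + u by omega] at hweight
    rw [ha] at hsecant
    nlinarith
  · nlinarith

end LineCodes

section LongLines

open Finset Configuration ProjectivePlane
open scoped Classical

variable {P L : Type*} [Membership P L] [Fintype L] [ProjectivePlane P L]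

variable (L) in
/-- The lines all of whose points, with at most `q` exceptions, lie in `B`. -/
noncomputable def longLines (q : ℕ) (B : Finset P) : Finset L :=
  {l | order P L + 1 ≤ lineCard B l + q}

variable {B : Finset P}

theorem mem_longLines {q : ℕ} {l : L} :
    l ∈ longLines L q B ↔ order P L + 1 ≤ lineCard B l + q :=
  mem_filter_univ l

variable [Fintype P] {p : ℕ}

/-- An `F_p`-code on the points of a projective plane that contains all lines and whose words
satisfy the inequality of Szőnyi and Weiner between the weight and the intersection numbers of the
support with lines. -/
structure IsLineCode (L : Type*) [Membership P L] [Fintype L] [ProjectivePlane P L]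
    (C : Submodule (ZMod p) (P → ZMod p)) : Prop where
  line_mem : ∀ l : L, (fun x => if x ∈ l then 1 else 0) ∈ C
  lineCard_mul_le : ∀ c ∈ C, ∀ l : L,
    lineCard (wordSupport c) l * (order P L + 1 - lineCard (wordSupport c) l) ≤ #(wordSupport c)

theorem IsLineCode.residualWord_mem {C : Submodule (ZMod p) (P → ZMod p)} (hC : IsLineCode L C)
    (hB : (fun x => if x ∈ B then 1 else 0) ∈ C) (K : Finset L) :
    residualWord p B K ∈ C := by
  have hsum : residualWord p B K =
      (fun x => if x ∈ B then 1 else 0) - ∑ l ∈ K, fun x => if x ∈ l then 1 else 0 := by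
    ext x
    simp only [residualWord, Pi.sub_apply, Finset.sum_apply, sum_boole]
  rw [hsum]
  exact C.sub_mem hB (C.sum_mem fun l _ => hC.line_mem l)

theorem card_longLines_add_le (hp : 5 ≤ p) (hQ : order P L = p ^ 4)
    (hB : #B ≤ p ^ 6 + p ^ 4 + 1) : #(longLines L (p ^ 2) B) + 2 * p ≤ 2 * p ^ 2 := by
  by_contra! hmany
  have hpp : p ≤ p ^ 2 := Nat.le_self_pow two_ne_zero p
  have hpp4 : p ^ 2 ≤ p ^ 4 := Nat.pow_le_pow_right (by omega) (by omega)
  obtain ⟨K, hKlong, hK⟩ := exists_subset_card_eq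
    (show 2 * p ^ 2 - 2 * p + 1 ≤ #(longLines L (p ^ 2) B) by omega)
  have hcover : #K * (p ^ 4 + 1 - p ^ 2) ≤ #B + #K ^ 2 :=
    (card_mul_le_card_covered_add_sq fun l hl => by
      have := mem_longLines.1 (hKlong hl)
      omega).trans (Nat.add_le_add_right (card_filter_le _ _) _)
  have hcover' := hcover.trans (Nat.add_le_add_right hB _)
  rw [hK] at hcover'
  zify [show p ^ 2 ≤ p ^ 4 + 1 by omega, show 2 * p ≤ 2 * p ^ 2 by omega] at hcover'
  obtain ⟨x, rfl⟩ := Nat.exists_eq_add_of_le hp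
  have hx : (0 : ℤ) ≤ x := x.cast_nonneg
  push_cast at hcover'
  ring_nf at hcover'
  nlinarith [pow_nonneg hx 2, pow_nonneg hx 3, pow_nonneg hx 4, pow_nonneg hx 5, pow_nonneg hx 6]

theorem card_wordSupport_residualWord_singleton_add_le [Nontrivial (ZMod p)] (B : Finset P)
    (l : L) :
    #(wordSupport (residualWord p B {l})) + 2 * lineCard B l ≤ #B + (order P L + 1) := by
  simpa [wordSupport_residualWord_empty] using
    card_wordSupport_residualWord_insert_add_le (p := p) (B := B) (notMem_empty l)

theorem card_wordSupport_residualWord_longLines_le [Nontrivial (ZMod p)] {q : ℕ} {l₀ : L}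
    (hl₀ : l₀ ∈ longLines L q B) (hlong : #(longLines L q B) ≤ 2 * q)
    (hQ : 6 * q ≤ order P L + 1) :
    #(wordSupport (residualWord p B (longLines L q B))) ≤
      #(wordSupport (residualWord p B {l₀})) := by
  suffices hK : ∀ K ⊆ (longLines L q B).erase l₀,
      #(wordSupport (residualWord p B (insert l₀ K))) ≤ #(wordSupport (residualWord p B {l₀})) by
    simpa only [insert_erase hl₀] using hK _ Subset.rfl
  intro K
  induction K using Finset.induction_on with
  | empty => intro _; rfl
  | insert l K hlK ih =>
    intro hsub
    obtain ⟨hl, hKsub⟩ := insert_subset_iff.1 hsub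
    obtain ⟨hne, hlong_l⟩ := mem_erase.1 hl
    have hstep := card_wordSupport_residualWord_insert_add_le (p := p) (B := B)
      (show l ∉ insert l₀ K by simp [hne, hlK])
    have hcard : #(insert l (insert l₀ K)) ≤ #(longLines L q B) :=
      card_le_card (insert_subset hlong_l (insert_subset hl₀ (hKsub.trans (erase_subset _ _))))
    rw [card_insert_of_notMem (by simp [hne, hlK])] at hcard
    rw [mem_longLines] at hlong_l
    have ih := ih hKsub
    rw [insert_comm]
    omega

theorem lineCard_wordSupport_residualWord_longLines_le {q : ℕ}
    (hgap : ∀ l : L, lineCard B l ≤ q + 1 ∨ order P L + 1 ≤ lineCard B l + q)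
    (hlong : #(longLines L q B) ≤ 2 * q) (l : L) :
    lineCard (wordSupport (residualWord p B (longLines L q B))) l ≤ 3 * q + 1 := by
  by_cases hl : l ∈ longLines L q B
  · have hbound := lineCard_wordSupport_residualWord_insert_add_le (p := p) (B := B)
      (notMem_erase l (longLines L q B))
    rw [insert_erase hl, card_erase_of_mem hl] at hbound
    rw [mem_longLines] at hl
    omega
  · have hbound := lineCard_wordSupport_residualWord_le_of_notMem (p := p) (B := B) hl
    have hshort := (hgap l).resolve_right (mem_longLines.not.1 hl)
    omega

variable {C : Submodule (ZMod p) (P → ZMod p)} {l₀ : L} {x : P}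

theorem lineCard_add_le_of_short [Nontrivial (ZMod p)] (hp : 5 ≤ p) (hQ : order P L = p ^ 4)
    (hC : IsLineCode L C) (hB : (fun x => if x ∈ B then 1 else 0) ∈ C)
    (hweight : #(wordSupport (residualWord p B {l₀})) ≤ p ^ 6 + p ^ 2)
    (hx₀ : x ∈ l₀) (hxB : x ∉ B) {l : L} (hl : l ≠ l₀) (hx : x ∈ l)
    (hmod : lineCard B l ≡ 1 [MOD p]) (hshort : lineCard B l ≤ p ^ 2 + 1) :
    lineCard B l + p ≤ p ^ 2 + 1 := by
  have hmod' : lineCard B l ≡ p ^ 2 + 1 [MOD p] :=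
    hmod.trans ((Nat.modEq_iff_dvd' (by omega)).2 (by simp [sq]))
  refine hmod'.add_le_of_lt (hshort.lt_of_ne fun heq => ?_)
  have hbound := hC.lineCard_mul_le _ (hC.residualWord_mem hB {l₀}) l
  rw [lineCard_wordSupport_residualWord_singleton hl hx₀ hx hxB, heq, hQ] at hbound
  have hq : 25 ≤ p ^ 2 := by nlinarith
  have hbound' := hbound.trans hweight
  rw [show p ^ 4 = (p ^ 2) ^ 2 by ring, show p ^ 6 = (p ^ 2) ^ 3 by ring] at hbound'
  generalize p ^ 2 = q at hq hbound'
  have hqq : q + 1 ≤ q ^ 2 := by nlinarith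
  obtain ⟨u, hu⟩ : ∃ u, q ^ 2 = u + q + 1 := ⟨q ^ 2 - (q + 1), by omega⟩
  rw [show q ^ 2 + 1 - (q + 1 + 1) = u by omega] at hbound'
  nlinarith

theorem card_wordSupport_residualWord_singleton_lt [Nontrivial (ZMod p)] (hp : 5 ≤ p)
    (hQ : order P L = p ^ 4) (hlong : l₀ ∈ longLines L (p ^ 2) B)
    (hx₀ : x ∈ l₀) (hxB : x ∉ B)
    (hfew : #{l ∈ (longLines L (p ^ 2) B).erase l₀ | x ∈ l} < p - 1)
    (hshort : ∀ l, x ∈ l → l ≠ l₀ → l ∉ longLines L (p ^ 2) B → lineCard B l + p ≤ p ^ 2 + 1) :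
    #(wordSupport (residualWord p B {l₀})) < p ^ 2 * (p ^ 4 + 1 - p ^ 2) := by
  have hw := card_wordSupport_residualWord_singleton_add_le (p := p) B l₀
  have hpp : 5 * p ≤ p ^ 2 := by nlinarith
  have hpp4 : 5 * p ^ 2 ≤ p ^ 4 := by nlinarith
  have hB := card_le_of_lineCard_through_le hxB hx₀ (K := (longLines L (p ^ 2) B).erase l₀)
    (a := p ^ 2 + 1 - p) (by omega) fun l hx hl hlK => by
      have := hshort l hx hl fun h => hlK (mem_erase.2 ⟨hl, h⟩)
      omega
  rw [mem_longLines] at hlong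
  rw [hQ] at hw hB hlong
  have hmul : #{l ∈ (longLines L (p ^ 2) B).erase l₀ | x ∈ l} * (p ^ 4 + 1 - (p ^ 2 + 1 - p)) ≤
      (p - 2) * (p ^ 4 + 1 - (p ^ 2 + 1 - p)) := Nat.mul_le_mul_right _ (by omega)
  rw [show p ^ 4 + 1 - (p ^ 2 + 1 - p) = p ^ 4 + p - p ^ 2 by omega] at hB hmul
  have hsum : p ^ 4 * (p ^ 2 + 1 - p) + (p - 2) * (p ^ 4 + p - p ^ 2) + p ^ 2
      < p ^ 2 * (p ^ 4 + 1 - p ^ 2) := by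
    zify [show p ≤ p ^ 2 + 1 by omega, show 2 ≤ p by omega, show p ^ 2 ≤ p ^ 4 + p by omega,
      show p ^ 2 ≤ p ^ 4 + 1 by omega]
    have hpos : (0 : ℤ) < (p - 2) * (p ^ 2 - p) := by
      zify at hp hpp
      exact mul_pos (by linarith) (by linarith)
    linarith [hpos]
  omega

/-- Otherwise subtract all long lines from `χ_B`: the resulting word does not vanish at a suitable
point of `l₀`, its weight is small, and yet its support has no long line. -/
theorem lt_lineCard_add_of_mem_longLines [Nontrivial (ZMod p)] (hp : 5 ≤ p)
    (hQ : order P L = p ^ 4) (hC : IsLineCode L C) (hB : (fun x => if x ∈ B then 1 else 0) ∈ C)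
    (hmod : ∀ l : L, lineCard B l ≡ 1 [MOD p])
    (hgap : ∀ l : L, lineCard B l ≤ p ^ 2 + 1 ∨ p ^ 4 + 1 ≤ lineCard B l + p ^ 2)
    (hl₀ : l₀ ∈ longLines L (p ^ 2) B) (hcard : #B ≤ p ^ 6 + lineCard B l₀) :
    p ^ 4 + 1 < lineCard B l₀ + 2 * p := by
  by_contra! hdeficient
  have hlong := mem_longLines.1 hl₀
  have hmany := card_longLines_add_le (L := L) (B := B) hp hQ (by omega)
  have hweight := card_wordSupport_residualWord_singleton_add_le (p := p) B l₀
  rw [← hQ] at hgap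
  obtain ⟨x, hx₀, hxB, hfew⟩ := exists_mem_notMem_card_through_lt (B := B)
    (notMem_erase l₀ (longLines L (p ^ 2) B)) (a := p - 1) (by
      rw [card_erase_of_mem hl₀, hQ]
      have hmul : 2 * p * (p - 1) ≤ (p ^ 4 + 1 - lineCard B l₀) * (p - 1) :=
        Nat.mul_le_mul_right _ (by omega)
      rw [Nat.mul_sub_one, show 2 * p * p = 2 * p ^ 2 by ring] at hmul
      have := card_pos.2 ⟨l₀, hl₀⟩
      omega)
  have hlt := card_wordSupport_residualWord_singleton_lt hp hQ hl₀ hx₀ hxB hfew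
    fun l hx hl hnotlong => lineCard_add_le_of_short hp hQ hC hB (by omega) hx₀ hxB hl hx (hmod l)
      ((hgap l).resolve_right (mem_longLines.not.1 hnotlong))
  have hthrough : #{l ∈ longLines L (p ^ 2) B | x ∈ l} =
      #{l ∈ (longLines L (p ^ 2) B).erase l₀ | x ∈ l} + 1 := by
    rw [filter_erase, card_erase_add_one (mem_filter.2 ⟨hl₀, hx₀⟩)]
  have hne : residualWord p B (longLines L (p ^ 2) B) x ≠ 0 :=
    residualWord_ne_zero_of_notMem hxB (by omega) (by omega)
  have hle := card_wordSupport_residualWord_longLines_le (p := p) hl₀ (by omega) (by nlinarith)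
  obtain ⟨l, hl⟩ := exists_lt_lineCard_wordSupport (q := p ^ 2) (by rw [hQ]; nlinarith)
    (hC.lineCard_mul_le _ (hC.residualWord_mem hB _))
    (by rw [hQ]; omega) hne
  have hsmall := lineCard_wordSupport_residualWord_longLines_le (p := p) hgap (by omega) l
  have hpp : 25 ≤ p ^ 2 := by nlinarith
  have hpp4 : 25 * p ^ 2 ≤ p ^ 4 := by nlinarith
  rw [hQ] at hl
  omega

end LongLines

section Points

open Finset
open scoped Classical

variable {F : Type} [Field F] {n : ℕ}

theorem eq_of_val_le_val {x y : ProjPoint F n} (h : x.1 ≤ y.1) : x = y :=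
  Subtype.ext (Submodule.eq_of_le_of_finrank_eq h (x.2.trans y.2.symm))

theorem finrank_sup_of_not_le {x : ProjPoint F n} {W : Submodule F (Fin n → F)}
    (hx : ¬ x.1 ≤ W) : finrank F (x.1 ⊔ W : Submodule F (Fin n → F)) = finrank F W + 1 := by
  have hinf := Submodule.finrank_lt_finrank_of_lt (inf_lt_left.2 hx)
  have hsum := Submodule.finrank_sup_add_finrank_inf_eq x.1 W
  rw [x.2] at hinf hsum
  omega

theorem mem_pointsIn {x : ProjPoint F n} {W : Submodule F (Fin n → F)} :
    x ∈ pointsIn F n W ↔ x.1 ≤ W :=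
  Iff.rfl

theorem pointsIn_inf (W W' : Submodule F (Fin n → F)) :
    pointsIn F n (W ⊓ W') = pointsIn F n W ∩ pointsIn F n W' :=
  Set.ext fun x => le_inf_iff (c := x.1)

theorem secant_univ (W : Submodule F (Fin n → F)) :
    secant F n Set.univ W = (pointsIn F n W).ncard := by
  rw [secant, Set.univ_inter]

theorem secant_top (V : Set (ProjPoint F n)) : secant F n V ⊤ = V.ncard := by
  exact congrArg Set.ncard (Set.inter_eq_left.2 fun _ _ => mem_pointsIn.2 le_top)

variable [Fintype F]

instance : Finite (ProjPoint F n) := inferInstanceAs (Finite (Subtype _))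

noncomputable instance : Fintype (ProjPoint F n) := Fintype.ofFinite _

theorem secant_eq_card (V : Set (ProjPoint F n)) (W : Submodule F (Fin n → F)) :
    secant F n V W = #{x | x ∈ V ∧ x.1 ≤ W} := by
  rw [secant, Set.ncard_eq_toFinset_card']
  congr 1
  ext x
  exact Set.mem_toFinset.trans (mem_filter_univ x).symm

theorem secant_le_ncard_pointsIn (V : Set (ProjPoint F n)) (W : Submodule F (Fin n → F)) :
    secant F n V W ≤ (pointsIn F n W).ncard :=
  Set.ncard_le_ncard Set.inter_subset_right

theorem ncard_pointsIn_mul_add_one (W : Submodule F (Fin n → F)) :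
    (pointsIn F n W).ncard * (Fintype.card F - 1) + 1 = Fintype.card F ^ finrank F W := by
  let e : {H : Submodule F W // finrank F H = 1} ≃ pointsIn F n W :=
    { toFun H := ⟨⟨H.1.map W.subtype, (Submodule.finrank_map_subtype_eq _ _).trans H.2⟩,
        Submodule.map_subtype_le _ _⟩
      invFun x := ⟨x.1.1.comap W.subtype,
        (Submodule.comapSubtypeEquivOfLe x.2).finrank_eq.trans x.1.2⟩
      left_inv H := Subtype.ext (Submodule.comap_map_eq_of_injective W.injective_subtype _)
      right_inv x := Subtype.ext (Subtype.ext
        ((Submodule.map_comap_subtype _ _).trans (inf_eq_right.2 x.2))) }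
  have hcard := Projectivization.card' F W
  rw [Nat.card_congr ((Projectivization.equivSubmodule F W).trans e), Nat.card_coe_set_eq,
    Module.natCard_eq_pow_finrank (K := F), Nat.card_eq_fintype_card] at hcard
  exact hcard.symm

theorem ncard_pointsIn_line {l : Submodule F (Fin n → F)} (hl : finrank F l = 2) :
    (pointsIn F n l).ncard = Fintype.card F + 1 := by
  have hcard := ncard_pointsIn_mul_add_one l
  have hF : 1 < Fintype.card F := Fintype.one_lt_card
  rw [hl] at hcard
  zify [hF.le] at hcard ⊢
  refine mul_right_cancel₀ (sub_ne_zero.2 (mod_cast hF.ne' : (Fintype.card F : ℤ) ≠ 1)) ?_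
  linear_combination hcard

theorem ncard_pointsIn_natCast_eq_one {p : ℕ} (hpF : p ∣ Fintype.card F)
    {W : Submodule F (Fin n → F)} (hW : 1 ≤ finrank F W) :
    ((pointsIn F n W).ncard : ZMod p) = 1 := by
  have hcard := congrArg (Nat.cast : ℕ → ZMod p) (ncard_pointsIn_mul_add_one W)
  push_cast [Nat.cast_sub (Fintype.card_pos (α := F))] at hcard
  rw [(ZMod.natCast_eq_zero_iff _ _).2 hpF, zero_pow (by omega)] at hcard
  linear_combination -hcard

end Points

section CodewordSums

open Finset
open scoped Classical

variable {F : Type} [Field F] [Fintype F] {n p : ℕ}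

theorem sum_charVec_eq_secant (V : Set (ProjPoint F n)) (W : Submodule F (Fin n → F)) :
    ∑ x with x.1 ≤ W, charVec F p n V x = (secant F n V W : ZMod p) := by
  rw [secant_eq_card, card_filter, sum_filter]
  push_cast
  refine sum_congr rfl fun x _ => ?_
  by_cases hV : x ∈ V <;> simp [charVec, hV]

theorem sum_eq_sum_univ_of_mem_hypCode (hpF : p ∣ Fintype.card F) {c : ProjPoint F n → ZMod p}
    (hc : c ∈ hypCode F p n) {W : Submodule F (Fin n → F)} (hW : 2 ≤ finrank F W) :
    ∑ x with x.1 ≤ W, c x = ∑ x, c x := by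
  induction hc using Submodule.span_induction with
  | mem c hc =>
    obtain ⟨H, hH, rfl⟩ := hc
    suffices hone : ∀ W : Submodule F (Fin n → F), 2 ≤ finrank F W →
        ∑ x with x.1 ≤ W, charVec F p n (pointsIn F n H) x = 1 by
      rw [hone W hW]
      simpa using (hone ⊤ (hW.trans (Submodule.finrank_mono le_top))).symm
    intro W hW
    have hmeet : 1 ≤ finrank F (H ⊓ W : Submodule F (Fin n → F)) := by
      have hsum := Submodule.finrank_sup_add_finrank_inf_eq H W
      have hsup := Submodule.finrank_le (H ⊔ W)
      rw [finrank_fin_fun] at hsup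
      omega
    rw [sum_charVec_eq_secant, secant, ← pointsIn_inf, ncard_pointsIn_natCast_eq_one hpF hmeet]
  | zero => simp
  | add c d _ _ hc hd => simp only [Pi.add_apply, sum_add_distrib, hc, hd]
  | smul a c _ hc => simp only [Pi.smul_apply, ← smul_sum, hc]

theorem secant_modEq_ncard (hpF : p ∣ Fintype.card F) {V : Set (ProjPoint F n)}
    (hV : charVec F p n V ∈ hypCode F p n) {W : Submodule F (Fin n → F)}
    (hW : 2 ≤ finrank F W) : secant F n V W ≡ V.ncard [MOD p] := by
  rw [← ZMod.natCast_eq_natCast_iff, ← secant_top V, ← sum_charVec_eq_secant,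
    ← sum_charVec_eq_secant, sum_eq_sum_univ_of_mem_hypCode hpF hV hW]
  simp

end CodewordSums

section Averaging

open Finset
open scoped Classical

variable {F : Type} [Field F] [Fintype F] {n : ℕ}

noncomputable instance : Fintype (Submodule F (Fin n → F)) := Fintype.ofFinite _

/-- The subspaces containing `U` as a subspace of codimension one. -/
noncomputable def subspacesAbove (U : Submodule F (Fin n → F)) :
    Finset (Submodule F (Fin n → F)) :=
  {W | U ≤ W ∧ finrank F W = finrank F U + 1}

variable {U W : Submodule F (Fin n → F)}

theorem mem_subspacesAbove : W ∈ subspacesAbove U ↔ U ≤ W ∧ finrank F W = finrank F U + 1 :=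
  mem_filter_univ W

theorem card_notMem_add_secant (V : Set (ProjPoint F n)) (hUW : U ≤ W) :
    #{x | (x ∈ V ∧ ¬ x.1 ≤ U) ∧ x.1 ≤ W} + secant F n V U = secant F n V W := by
  have hon : secant F n V U = #{x | (x ∈ V ∧ x.1 ≤ W) ∧ x.1 ≤ U} := by
    rw [secant_eq_card]
    exact congrArg card (filter_congr fun x _ =>
      ⟨fun h => ⟨⟨h.1, h.2.trans hUW⟩, h.2⟩, fun h => ⟨h.1.1, h.2⟩⟩)
  have hoff : #{x | (x ∈ V ∧ ¬ x.1 ≤ U) ∧ x.1 ≤ W} = #{x | (x ∈ V ∧ x.1 ≤ W) ∧ ¬ x.1 ≤ U} :=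
    congrArg card (filter_congr fun x _ => and_right_comm)
  have hsplit := card_filter_add_card_filter_not
    (s := ({x | x ∈ V ∧ x.1 ≤ W} : Finset (ProjPoint F n))) fun x => x.1 ≤ U
  rw [filter_filter, filter_filter] at hsplit
  rw [hon, hoff, secant_eq_card, add_comm, hsplit]

theorem sum_secant_subspacesAbove_add (V : Set (ProjPoint F n)) (U : Submodule F (Fin n → F)) :
    ∑ W ∈ subspacesAbove U, secant F n V W + secant F n V U =
      V.ncard + #(subspacesAbove U) * secant F n V U := by
  have hfiber : ∀ W ∈ subspacesAbove U, ∀ x : ProjPoint F n, ¬ x.1 ≤ U →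
      (x.1 ⊔ U = W ↔ x.1 ≤ W) := by
    intro W hW x hx
    rw [mem_subspacesAbove] at hW
    exact ⟨fun h => h ▸ le_sup_left, fun h => Submodule.eq_of_le_of_finrank_eq (sup_le h hW.1)
      ((finrank_sup_of_not_le hx).trans hW.2.symm)⟩
  have hoff : #{x | x ∈ V ∧ ¬ x.1 ≤ U} =
      ∑ W ∈ subspacesAbove U, #{x | (x ∈ V ∧ ¬ x.1 ≤ U) ∧ x.1 ≤ W} := by
    rw [card_eq_sum_card_fiberwise (f := fun x : ProjPoint F n => x.1 ⊔ U)
      (t := subspacesAbove U) fun x hx => mem_coe.2 <| mem_subspacesAbove.2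
        ⟨le_sup_right, finrank_sup_of_not_le ((mem_filter_univ x).1 hx).2⟩]
    refine sum_congr rfl fun W hW => ?_
    rw [filter_filter]
    exact congrArg card (filter_congr fun x _ => and_congr_right fun hx => hfiber W hW x hx.2)
  have htotal := card_notMem_add_secant V (le_top : U ≤ ⊤)
  simp only [le_top, and_true, secant_top, hoff] at htotal
  rw [← htotal, add_right_comm, ← smul_eq_mul, ← sum_const, ← sum_add_distrib]
  congr 1
  exact sum_congr rfl fun W hW => (card_notMem_add_secant V (mem_subspacesAbove.1 hW).1).symm

theorem pow_finrank_mul_card_subspacesAbove (U : Submodule F (Fin n → F)) :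
    Fintype.card F ^ finrank F U * (#(subspacesAbove U) * (Fintype.card F - 1) + 1) =
      Fintype.card F ^ n := by
  have hcount := sum_secant_subspacesAbove_add Set.univ U
  have hF : 1 ≤ Fintype.card F := Fintype.card_pos
  have hU := ncard_pointsIn_mul_add_one U
  have htop := ncard_pointsIn_mul_add_one (⊤ : Submodule F (Fin n → F))
  have hsum : (∑ W ∈ subspacesAbove U, secant F n Set.univ W) * (Fintype.card F - 1) +
      #(subspacesAbove U) = #(subspacesAbove U) * Fintype.card F ^ (finrank F U + 1) := by
    rw [sum_mul, card_eq_sum_ones, ← sum_add_distrib, sum_mul]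
    refine sum_congr rfl fun W hW => ?_
    rw [secant_univ, ncard_pointsIn_mul_add_one, (mem_subspacesAbove.1 hW).2, one_mul]
  rw [← secant_univ] at hU htop
  rw [secant_top, finrank_top, finrank_fin_fun] at htop
  zify [hF] at *
  linear_combination htop + (#(subspacesAbove U) - 1 : ℤ) * hU - hsum +
    (Fintype.card F - 1 : ℤ) * hcount

theorem exists_mem_subspacesAbove_secant_le {V : Set (ProjPoint F n)} {m : ℕ}
    (hV : V.ncard < #(subspacesAbove U) * (m + 1) + secant F n V U) :
    ∃ W ∈ subspacesAbove U, secant F n V W ≤ m + secant F n V U := by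
  by_contra! hlarge
  have hsum := card_nsmul_le_sum _ _ _ fun W hW => Nat.succ_le_of_lt (hlarge W hW)
  have hcount := sum_secant_subspacesAbove_add V U
  rw [smul_eq_mul] at hsum
  nlinarith

end Averaging

section PlanesOfProjectiveSpace

open Finset Configuration ProjectivePlane
open scoped Classical

variable {F : Type} [Field F] {n : ℕ} {π : Submodule F (Fin n → F)}

/-- The points of the projective space `PG(n - 1, F)` that lie in `π`. -/
abbrev PlanePoint (π : Submodule F (Fin n → F)) : Type :=
  {x : ProjPoint F n // x.1 ≤ π}

/-- The lines of the projective space `PG(n - 1, F)` that lie in `π`. -/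
abbrev PlaneLine (π : Submodule F (Fin n → F)) : Type :=
  {l : Submodule F (Fin n → F) // l ≤ π ∧ finrank F l = 2}

instance : Membership (PlanePoint π) (PlaneLine π) := ⟨fun l x => x.1.1 ≤ l.1⟩

theorem mem_planeLine {x : PlanePoint π} {l : PlaneLine π} : x ∈ l ↔ x.1.1 ≤ l.1 :=
  Iff.rfl

/-- The point spanned by a nonzero vector of `π`. -/
def spanPoint (v : π) (hv : v ≠ 0) : PlanePoint π :=
  ⟨⟨F ∙ (v : Fin n → F), finrank_span_singleton (by simpa using hv)⟩, by simp⟩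

/-- The line joining two points of `π`. -/
def joinLine {x y : PlanePoint π} (hxy : x ≠ y) : PlaneLine π :=
  ⟨x.1.1 ⊔ y.1.1, sup_le x.2 y.2, by
    rw [finrank_sup_of_not_le fun h => hxy (Subtype.ext (eq_of_val_le_val h)), y.1.2]⟩

theorem eq_or_eq_of_mem_planeLine {x y : PlanePoint π} {l m : PlaneLine π} (hxl : x ∈ l)
    (hyl : y ∈ l) (hxm : x ∈ m) (hym : y ∈ m) : x = y ∨ l = m := by
  refine or_iff_not_imp_left.2 fun hxy => ?_
  have hjoin : ∀ k : PlaneLine π, x ∈ k → y ∈ k → joinLine hxy = k := fun k hx hy =>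
    Subtype.ext (Submodule.eq_of_le_of_finrank_eq (sup_le hx hy)
      ((joinLine hxy).2.2.trans k.2.2.symm))
  rw [← hjoin l hxl hyl, hjoin m hxm hym]

variable [hπ : Fact (finrank F π = 3)]

/-- The intersection point of two lines of the plane `π`. -/
def meetPoint {l m : PlaneLine π} (hlm : l ≠ m) : PlanePoint π :=
  ⟨⟨l.1 ⊓ m.1, by
    have hlt : finrank F (l.1 ⊓ m.1 : Submodule F (Fin n → F)) < finrank F l.1 :=
      Submodule.finrank_lt_finrank_of_lt <| inf_lt_left.2 fun h =>
        hlm (Subtype.ext (Submodule.eq_of_le_of_finrank_eq h (l.2.2.trans m.2.2.symm)))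
    have hsup := Submodule.finrank_mono (sup_le l.2.1 m.2.1)
    have hsum := Submodule.finrank_sup_add_finrank_inf_eq l.1 m.1
    rw [l.2.2] at hlt hsum
    rw [m.2.2] at hsum
    rw [hπ.out] at hsup
    omega⟩, inf_le_left.trans l.2.1⟩

/-- The line of the plane `π` on which a nonzero linear form on `π` vanishes. -/
def kerLine (φ : Dual F π) (hφ : φ ≠ 0) : PlaneLine π :=
  ⟨(LinearMap.ker φ).map π.subtype, Submodule.map_subtype_le _ _, by
    have := Dual.finrank_ker_add_one_of_ne_zero hφ
    rw [Submodule.finrank_map_subtype_eq]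
    rw [hπ.out] at this
    omega⟩

theorem spanPoint_mem_kerLine {v : π} (hv : v ≠ 0) {φ : Dual F π} (hφ : φ ≠ 0) :
    spanPoint v hv ∈ kerLine φ hφ ↔ φ v = 0 := by
  simp [mem_planeLine, spanPoint, kerLine]

variable (π) in
theorem exists_planeLine_config :
    ∃ (x₁ x₂ x₃ : PlanePoint π) (l₁ l₂ l₃ : PlaneLine π),
      x₁ ∉ l₂ ∧ x₁ ∉ l₃ ∧ x₂ ∉ l₁ ∧ x₂ ∈ l₂ ∧ x₂ ∈ l₃ ∧ x₃ ∉ l₁ ∧ x₃ ∈ l₂ ∧ x₃ ∉ l₃ := by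
  let b : Basis (Fin 3) F π := finBasisOfFinrankEq F π hπ.out
  have hφ : ∀ {φ : Dual F π} (i : Fin 3), φ (b i) ≠ 0 → φ ≠ 0 := fun i h hφ => h (by simp [hφ])
  refine ⟨spanPoint (b 0) (b.ne_zero 0), spanPoint (b 1) (b.ne_zero 1),
    spanPoint (b 2) (b.ne_zero 2), kerLine (b.coord 1 - b.coord 2) (hφ 1 ?_),
    kerLine (b.coord 0) (hφ 0 ?_), kerLine (b.coord 0 - b.coord 2) (hφ 0 ?_), ?_⟩ <;>
  simp [spanPoint_mem_kerLine]

instance : Nondegenerate (PlanePoint π) (PlaneLine π) where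
  exists_point l := by
    by_contra! hl
    obtain ⟨x₁, x₂, x₃, -, l₂, l₃, h₁₂, -, -, h₂₂, h₂₃, -, h₃₂, h₃₃⟩ := exists_planeLine_config π
    rcases eq_or_eq_of_mem_planeLine (hl x₂) (hl x₃) h₂₂ h₃₂ with rfl | rfl
    · exact h₃₃ h₂₃
    · exact h₁₂ (hl x₁)
  exists_line x := by
    by_contra! hx
    obtain ⟨-, x₂, x₃, l₁, l₂, l₃, -, -, h₂₁, h₂₂, h₂₃, -, h₃₂, h₃₃⟩ := exists_planeLine_config π
    rcases eq_or_eq_of_mem_planeLine (hx l₂) h₂₂ (hx l₃) h₂₃ with rfl | rfl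
    · exact h₂₁ (hx l₁)
    · exact h₃₃ h₃₂
  eq_or_eq := eq_or_eq_of_mem_planeLine

instance : ProjectivePlane (PlanePoint π) (PlaneLine π) where
  mkPoint := meetPoint
  mkPoint_ax _ := ⟨inf_le_left, inf_le_right⟩
  mkLine := joinLine
  mkLine_ax _ := ⟨le_sup_left, le_sup_right⟩
  exists_config := exists_planeLine_config π

end PlanesOfProjectiveSpace

section PlaneCodes

open Finset Configuration ProjectivePlane
open scoped Classical

variable {F : Type} [Field F] {n p : ℕ} {π : Submodule F (Fin n → F)}

theorem exists_dual_ker_eq_of_finrank_eq {H : Submodule F (Fin n → F)} (hH : finrank F H = n - 1) :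
    ∃ φ : Dual F (Fin n → F), LinearMap.ker φ = H := by
  rcases eq_or_ne H ⊤ with rfl | hne
  · exact ⟨0, LinearMap.ker_zero⟩
  obtain ⟨φ, hφ, hle⟩ := H.exists_le_ker_of_lt_top hne.lt_top
  have hker := Dual.finrank_ker_add_one_of_ne_zero hφ
  rw [finrank_fin_fun] at hker
  exact ⟨φ, (Submodule.eq_of_le_of_finrank_eq hle (by omega)).symm⟩

theorem charVec_pointsIn_ker_mem_hypCode {φ : Dual F (Fin n → F)} (hφ : φ ≠ 0) :
    charVec F p n (pointsIn F n (LinearMap.ker φ)) ∈ hypCode F p n := by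
  have hker := Dual.finrank_ker_add_one_of_ne_zero hφ
  rw [finrank_fin_fun] at hker
  exact Submodule.subset_span ⟨_, by omega, rfl⟩

/-- The restriction to the points of `π` of the code spanned by the hyperplanes. -/
def planeCode (p : ℕ) (π : Submodule F (Fin n → F)) :
    Submodule (ZMod p) (PlanePoint π → ZMod p) :=
  (hypCode F p n).map (LinearMap.funLeft (ZMod p) (ZMod p) Subtype.val)

theorem planeLine_mem_planeCode [hπ : Fact (finrank F π = 3)] (l : PlaneLine π) :
    (fun x => if x ∈ l then 1 else 0) ∈ planeCode p π := by
  obtain ⟨x, hx⟩ := Nondegenerate.exists_point (P := PlanePoint π) l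
  obtain ⟨v, hvx, hvl⟩ := SetLike.not_le_iff_exists.1 hx
  obtain ⟨φ, hφv, hle⟩ := Submodule.exists_le_ker_of_notMem hvl
  have hlt : finrank F (π ⊓ LinearMap.ker φ : Submodule F (Fin n → F)) < finrank F π :=
    Submodule.finrank_lt_finrank_of_lt (inf_lt_left.2 fun h => hφv (h (x.2 hvx)))
  have hmeet : l.1 = π ⊓ LinearMap.ker φ :=
    Submodule.eq_of_le_of_finrank_le (le_inf l.2.1 hle) (by rw [l.2.2]; have := hπ.out; omega)
  refine ⟨_, charVec_pointsIn_ker_mem_hypCode (p := p) (φ := φ) fun h => hφv (by simp [h]), ?_⟩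
  ext y
  have hy : y ∈ l ↔ y.1 ∈ pointsIn F n (LinearMap.ker φ) := by
    rw [mem_planeLine, hmeet, le_inf_iff, mem_pointsIn, and_iff_right y.2]
  simp [LinearMap.funLeft_apply, charVec, Set.indicator_apply, hy]

variable [Fintype F]

noncomputable instance : Fintype (PlanePoint π) := Fintype.ofFinite _

noncomputable instance : Fintype (PlaneLine π) := Fintype.ofFinite _

/-- The points of `S` that lie in `π`. -/
noncomputable def planeTrace (π : Submodule F (Fin n → F)) (S : Set (ProjPoint F n)) :
    Finset (PlanePoint π) :=
  {x | x.1 ∈ S}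

theorem mem_planeTrace {S : Set (ProjPoint F n)} {x : PlanePoint π} :
    x ∈ planeTrace π S ↔ x.1 ∈ S :=
  mem_filter_univ x

theorem card_planeTrace_filter (S : Set (ProjPoint F n)) {W : Submodule F (Fin n → F)}
    (hW : W ≤ π) : #{x ∈ planeTrace π S | x.1.1 ≤ W} = secant F n S W := by
  rw [secant_eq_card, ← card_map (Function.Embedding.subtype _)]
  congr 1
  ext x
  simp only [mem_map, mem_filter, mem_planeTrace, mem_univ, true_and]
  exact ⟨fun ⟨_, hy, hyx⟩ => hyx ▸ hy, fun hx => ⟨⟨x, hx.2.trans hW⟩, hx, rfl⟩⟩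

theorem card_planeTrace (π : Submodule F (Fin n → F)) (S : Set (ProjPoint F n)) :
    #(planeTrace π S) = secant F n S π := by
  rw [← card_planeTrace_filter S le_rfl, filter_true_of_mem fun x _ => x.2]

theorem lineCard_planeTrace (S : Set (ProjPoint F n)) (l : PlaneLine π) :
    lineCard (planeTrace π S) l = secant F n S l.1 :=
  card_planeTrace_filter S l.2.1

variable (π) in
theorem order_plane [Fact (finrank F π = 3)] :
    order (PlanePoint π) (PlaneLine π) = Fintype.card F := by
  obtain ⟨-, -, -, l, -⟩ := exists_planeLine_config π
  have hcard := lineCard_planeTrace Set.univ l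
  have huniv : planeTrace π (Set.univ : Set (ProjPoint F n)) = univ := by
    ext; simp [mem_planeTrace]
  rw [secant_univ, ncard_pointsIn_line l.2.2, huniv, lineCard, card_points_on_line] at hcard
  exact Nat.succ_injective hcard

theorem planeTrace_mem_planeCode {V : Set (ProjPoint F n)}
    (hV : charVec F p n V ∈ hypCode F p n) :
    (fun x => if x ∈ planeTrace π V then 1 else 0) ∈ planeCode p π := by
  refine ⟨_, hV, ?_⟩
  ext x
  simp [LinearMap.funLeft_apply, charVec, Set.indicator_apply, mem_planeTrace]

end PlaneCodes

section MomentPolynomials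

open Finset Polynomial

variable {F : Type*} [Field F] [Fintype F] [DecidableEq F]

theorem natDegree_C_add_C_mul_X_pow_le {R : Type*} [Semiring R] (a b : R) (i : ℕ) :
    ((C a + C b * X) ^ i).natDegree ≤ i := by
  refine (natDegree_pow_le_of_le i (natDegree_add_le_of_degree_le (n := 1) ?_ ?_)).trans_eq
    (mul_one i)
  · simp
  · exact (natDegree_C_mul_le b X).trans natDegree_X_le

/-- If `a = 0` the moment is a constant times the indicator of `b + y * c = 0`; that constant
`∑ x, x ^ i` vanishes for `i < |F| - 1`, and the indicator is a polynomial of degree `|F| - 1`. -/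
theorem exists_moment_polynomial_of_linear_eq_zero (a b c : F) (i : ℕ) :
    ∃ m : F[X], m.natDegree ≤ i ∧
      ∀ y, m.eval y = ∑ x, x ^ i * if x * a + b + y * c = 0 then 1 else 0 := by
  rcases eq_or_ne a 0 with rfl | ha
  · simp only [mul_zero, zero_add, ← sum_mul]
    rcases lt_or_ge i (Fintype.card F - 1) with hi | hi
    · exact ⟨0, by simp, fun y => by simp [FiniteField.sum_pow_lt_card_sub_one F i hi]⟩
    refine ⟨C (∑ x : F, x ^ i) * (1 - (C b + C c * X) ^ (Fintype.card F - 1)), ?_, fun y => ?_⟩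
    · refine (natDegree_C_mul_le _ _).trans ((natDegree_sub_le _ _).trans (max_le ?_ ?_))
      · simp
      · exact (natDegree_C_add_C_mul_X_pow_le b c _).trans hi
    · simp only [eval_mul, eval_C, eval_sub, eval_one, eval_pow, eval_add, eval_X, mul_comm c]
      congr 1
      split_ifs with hy
      · rw [hy, zero_pow (Nat.sub_ne_zero_of_lt Fintype.one_lt_card), sub_zero]
      · rw [FiniteField.pow_card_sub_one_eq_one _ hy, sub_self]
  · refine ⟨(C (-b / a) + C (-c / a) * X) ^ i, natDegree_C_add_C_mul_X_pow_le _ _ i, fun y => ?_⟩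
    have hroot : ∀ x, x * a + b + y * c = 0 ↔ x = -b / a + -c / a * y := fun x => by
      field_simp
      constructor <;> intro h <;> linear_combination h
    simp [hroot]

end MomentPolynomials

section SzonyiWeiner

open Finset Polynomial
open scoped Classical

variable {F : Type} [Field F] {n : ℕ} {o u v : Fin n → F}

theorem add_add_ne_zero_of_linearIndependent (h : LinearIndependent F ![v, u, o]) (x y : F) :
    x • o + u + y • v ≠ 0 := fun h0 => by
  have := Fintype.linearIndependent_iff.1 h ![y, 1, x] (by
    rw [← h0, Fin.sum_univ_three]; simp; abel) 1
  simp at this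

/-- The point with affine coordinates `(x, y)` in the frame `o, u, v` of the plane spanned by these
vectors, in which `o` and `v` span the line at infinity. -/
def affinePoint (h : LinearIndependent F ![v, u, o]) (x y : F) : ProjPoint F n :=
  ⟨F ∙ (x • o + u + y • v), finrank_span_singleton (add_add_ne_zero_of_linearIndependent h x y)⟩

variable {h : LinearIndependent F ![v, u, o]}

theorem affinePoint_le_iff {W : Submodule F (Fin n → F)} {x y : F} :
    (affinePoint h x y).1 ≤ W ↔ x • o + u + y • v ∈ W :=
  Submodule.span_singleton_le_iff_mem _ _

theorem affinePoint_inj {x y x' y' : F} :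
    affinePoint h x y = affinePoint h x' y' ↔ x = x' ∧ y = y' := by
  refine ⟨fun heq => ?_, fun ⟨hx, hy⟩ => by rw [hx, hy]⟩
  obtain ⟨c, hc⟩ := Submodule.mem_span_singleton.1
    (affinePoint_le_iff.1 (congrArg Subtype.val heq).le)
  have hcoeff := Fintype.linearIndependent_iff.1 h ![c * y' - y, c - 1, c * x' - x] (by
    rw [Fin.sum_univ_three, ← sub_eq_zero.2 hc]; simp; module)
  have hy := hcoeff 0
  have hone := hcoeff 1
  have hx := hcoeff 2
  simp only [Matrix.cons_val, sub_eq_zero] at hx hy hone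
  rw [hone, one_mul] at hx hy
  exact ⟨hx.symm, hy.symm⟩

theorem exists_span_singleton_eq (z : ProjPoint F n) : ∃ w, z.1 = F ∙ w := by
  obtain ⟨w, -, hspan⟩ := finrank_eq_one_iff'.1 z.2
  refine ⟨w, le_antisymm (fun y hy => ?_) ((Submodule.span_singleton_le_iff_mem _ _).2 w.2)⟩
  obtain ⟨a, ha⟩ := hspan ⟨y, hy⟩
  exact Submodule.mem_span_singleton.2 ⟨a, congrArg Subtype.val ha⟩

theorem exists_affinePoint_eq {O z : ProjPoint F n} (hO : O.1 = F ∙ o)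
    (hzl : z.1 ≤ Submodule.span F {o, u}) (hz : z ≠ O) : ∃ x, affinePoint h x 0 = z := by
  obtain ⟨w, hw⟩ := exists_span_singleton_eq z
  have hwz : w ∈ z.1 := hw ▸ Submodule.mem_span_singleton_self w
  obtain ⟨a, b, hab⟩ := Submodule.mem_span_pair.1 (hzl hwz)
  have hb : b ≠ 0 := by
    rintro rfl
    refine hz (eq_of_val_le_val ?_)
    rw [hw, hO, Submodule.span_singleton_le_iff_mem]
    exact Submodule.mem_span_singleton.2 ⟨a, by rw [← hab, zero_smul, add_zero]⟩
  refine ⟨b⁻¹ * a, eq_of_val_le_val (affinePoint_le_iff.2 ?_)⟩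
  have hscale : (b⁻¹ * a) • o + u + (0 : F) • v = b⁻¹ • w := by
    rw [← hab, smul_add, smul_smul, inv_smul_smul₀ hb, zero_smul, add_zero]
  exact hscale ▸ z.1.smul_mem _ hwz

theorem exists_frame {O : ProjPoint F n} {l π : Submodule F (Fin n → F)} (hl : finrank F l = 2)
    (hπ : finrank F π = 3) (hOl : O.1 ≤ l) (hlπ : l ≤ π) :
    ∃ o u, ∃ v ∈ π, O.1 = F ∙ o ∧ l = Submodule.span F {o, u} ∧
      LinearIndependent F ![v, u, o] := by
  obtain ⟨o, ho⟩ := exists_span_singleton_eq O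
  have hOlt : O.1 < l := Submodule.lt_of_le_of_finrank_lt_finrank hOl (by rw [O.2, hl]; norm_num)
  have hlt : l < π := Submodule.lt_of_le_of_finrank_lt_finrank hlπ (by rw [hl, hπ]; norm_num)
  obtain ⟨u, hul, huO⟩ := SetLike.exists_of_lt hOlt
  obtain ⟨v, hvπ, hvl⟩ := SetLike.exists_of_lt hlt
  have ho0 : o ≠ 0 := fun h0 => by
    have hrank := O.2
    rw [ho, h0, Submodule.span_zero_singleton, finrank_bot] at hrank
    exact zero_ne_one hrank
  have hpair : LinearIndependent F ![u, o] := linearIndependent_finCons.2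
    ⟨linearIndependent_unique_iff.2 ho0, by rwa [Matrix.range_cons, Matrix.range_empty,
      Set.union_empty, ← ho]⟩
  have hrange : Set.range ![u, o] = {o, u} := by
    rw [Matrix.range_cons_cons_empty, Set.pair_comm]
  have hspan : Submodule.span F {o, u} = l := by
    refine Submodule.eq_of_le_of_finrank_eq (Submodule.span_le.2 ?_) ?_
    · exact Set.pair_subset (hOl (ho ▸ Submodule.mem_span_singleton_self o)) hul
    · rw [← hrange, finrank_span_eq_card hpair, hl, Fintype.card_fin]
  refine ⟨o, u, v, hvπ, ho, hspan.symm, linearIndependent_finCons.2 ⟨hpair, ?_⟩⟩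
  rwa [hrange, hspan]

theorem exists_moment_polynomial_of_mem_hypCode [Fintype F] {p : ℕ} [CharP F p]
    (h : LinearIndependent F ![v, u, o]) {c : ProjPoint F n → ZMod p}
    (hc : c ∈ hypCode F p n) (i : ℕ) :
    ∃ m : F[X], m.natDegree ≤ i ∧
      ∀ y, m.eval y = ∑ x, x ^ i * ZMod.castHom (dvd_refl p) F (c (affinePoint h x y)) := by
  induction hc using Submodule.span_induction with
  | mem c hc =>
    obtain ⟨H, hH, rfl⟩ := hc
    obtain ⟨φ, rfl⟩ := exists_dual_ker_eq_of_finrank_eq hH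
    obtain ⟨m, hdeg, hm⟩ := exists_moment_polynomial_of_linear_eq_zero (φ o) (φ u) (φ v) i
    refine ⟨m, hdeg, fun y => (hm y).trans (sum_congr rfl fun x _ => ?_)⟩
    have hmem : affinePoint h x y ∈ pointsIn F n (LinearMap.ker φ) ↔
        x * φ o + φ u + y * φ v = 0 := by
      simp [mem_pointsIn, affinePoint_le_iff]
    simp only [charVec, Set.indicator_apply, hmem, Pi.one_apply]
    split_ifs <;> simp
  | zero => exact ⟨0, by simp, by simp⟩
  | add c d _ _ hc hd =>
    obtain ⟨m, hdeg, hm⟩ := hc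
    obtain ⟨m', hdeg', hm'⟩ := hd
    exact ⟨m + m', natDegree_add_le_of_degree_le hdeg hdeg', fun y => by
      simp only [eval_add, hm, hm', Pi.add_apply, map_add, mul_add, sum_add_distrib]⟩
  | smul a c _ hc =>
    obtain ⟨m, hdeg, hm⟩ := hc
    refine ⟨C (ZMod.castHom (dvd_refl p) F a) * m, (natDegree_C_mul_le _ _).trans hdeg, fun y => ?_⟩
    simp only [eval_mul, eval_C, hm, Pi.smul_apply, smul_eq_mul, map_mul, mul_sum, mul_left_comm]

variable [Fintype F]

theorem card_affinePoint_mem_eq_secant {O : ProjPoint F n} (hO : O.1 = F ∙ o)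
    {S : Set (ProjPoint F n)} (hOS : O ∉ S) :
    #{x | affinePoint h x 0 ∈ S} = secant F n S (Submodule.span F {o, u}) := by
  rw [secant_eq_card]
  refine card_bij (fun x _ => affinePoint h x 0) (fun x hx => ?_)
    (fun x _ x' _ heq => (affinePoint_inj.1 heq).1) (fun z hz => ?_)
  · refine (mem_filter_univ _).2 ⟨(mem_filter_univ x).1 hx, affinePoint_le_iff.2 ?_⟩
    exact Submodule.mem_span_pair.2 ⟨x, 1, by simp⟩
  · obtain ⟨hzS, hzl⟩ := (mem_filter_univ z).1 hz
    obtain ⟨x, rfl⟩ := exists_affinePoint_eq (h := h) hO hzl fun hzO => hOS (hzO ▸ hzS)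
    exact ⟨x, (mem_filter_univ x).2 hzS, rfl⟩

theorem sum_card_affinePoint_mem_le_secant {π : Submodule F (Fin n → F)}
    (ho : o ∈ π) (hu : u ∈ π) (hv : v ∈ π) (S : Set (ProjPoint F n)) :
    ∑ y, #{x | affinePoint h x y ∈ S} ≤ secant F n S π := by
  rw [secant_eq_card, ← card_sigma]
  refine card_le_card_of_injOn (fun t => affinePoint h t.2 t.1) (fun t ht => ?_)
    fun t _ t' _ heq => ?_
  · refine (mem_filter_univ _).2 ⟨(mem_filter_univ t.2).1 (mem_sigma.1 ht).2, ?_⟩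
    exact affinePoint_le_iff.2 (add_mem (add_mem (π.smul_mem _ ho) hu) (π.smul_mem _ hv))
  · obtain ⟨hx, hy⟩ := affinePoint_inj.1 heq
    exact Sigma.ext hy (heq_of_eq hx)

variable {p : ℕ} [Fact p.Prime] [CharP F p]

theorem card_mul_secant_support_le {c : ProjPoint F n → ZMod p} (hc : c ∈ hypCode F p n)
    {O : ProjPoint F n} {l π : Submodule F (Fin n → F)} (hl : finrank F l = 2)
    (hπ : finrank F π = 3) (hlπ : l ≤ π) (hOl : O.1 ≤ l) (hO : c O = 0) :
    Fintype.card F * secant F n (Function.support c) l ≤ secant F n (Function.support c) π +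
      secant F n (Function.support c) l * (secant F n (Function.support c) l - 1) := by
  obtain ⟨o, u, v, hv, ho, rfl, h⟩ := exists_frame hl hπ hOl hlπ
  choose μ hdeg hμ using exists_moment_polynomial_of_mem_hypCode h hc
  have hmoments := card_mul_le_sum_card_add_of_moments hdeg hμ 0
  simp only [_root_.map_ne_zero, ← Function.mem_support (f := c)] at hmoments
  rw [card_affinePoint_mem_eq_secant ho (Function.notMem_support.2 hO)] at hmoments
  refine hmoments.trans (Nat.add_le_add_right (sum_card_affinePoint_mem_le_secant ?_ ?_ hv _) _) <;>
    exact hlπ (Submodule.subset_span (by simp))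

theorem secant_support_mul_le {c : ProjPoint F n → ZMod p} (hc : c ∈ hypCode F p n)
    {l π : Submodule F (Fin n → F)} (hl : finrank F l = 2) (hπ : finrank F π = 3) (hlπ : l ≤ π) :
    secant F n (Function.support c) l *
      (Fintype.card F + 1 - secant F n (Function.support c) l) ≤
        secant F n (Function.support c) π := by
  have hle := secant_le_ncard_pointsIn (Function.support c) l
  rw [ncard_pointsIn_line hl] at hle
  set s := secant F n (Function.support c) l with hs
  by_cases hfull : pointsIn F n l ⊆ Function.support c
  · have : s = Fintype.card F + 1 := by
      rw [hs, secant, Set.inter_eq_right.2 hfull, ncard_pointsIn_line hl]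
    simp [this]
  obtain ⟨O, hOl, hO⟩ := Set.not_subset.1 hfull
  have hbound := card_mul_secant_support_le hc hl hπ hlπ hOl (Function.notMem_support.1 hO)
  rw [← hs] at hbound
  rcases Nat.eq_zero_or_pos s with hzero | hpos
  · simp [hzero]
  zify [hle, hpos] at hbound ⊢
  linarith

theorem isLineCode_planeCode {π : Submodule F (Fin n → F)} [hπ : Fact (finrank F π = 3)] :
    IsLineCode (PlaneLine π) (planeCode p π) where
  line_mem l := by convert planeLine_mem_planeCode l
  lineCard_mul_le := by
    rintro _ ⟨c, hc, rfl⟩ l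
    have hsupp : wordSupport (LinearMap.funLeft (ZMod p) (ZMod p) Subtype.val c) =
        planeTrace π (Function.support c) := by
      ext x
      rw [mem_wordSupport, mem_planeTrace, Function.mem_support, LinearMap.funLeft_apply]
    rw [hsupp, lineCard_planeTrace, card_planeTrace, order_plane]
    exact secant_support_mul_le hc l.2.2 hπ.out l.2.1

end SzonyiWeiner

section QuasiHermitianSize

open Finset
open scoped Classical

variable {q r v : ℕ}

theorem modEq_one_of_quasiHermitian_size (hr : r ≠ 0)
    (hv : (v : ℤ) * ((q : ℤ) ^ 2 - 1) = ((q : ℤ) ^ (r + 1) + (-1) ^ r) * ((q : ℤ) ^ r - (-1) ^ r)) :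
    v ≡ 1 [MOD q] := by
  obtain ⟨k, rfl⟩ := Nat.exists_eq_add_one_of_ne_zero hr
  have hsign : ((-1 : ℤ) ^ (k + 1)) ^ 2 = 1 := by rw [← pow_mul, mul_comm, pow_mul]; simp
  refine (Int.natCast_modEq_iff.1 (Int.modEq_iff_dvd.2 ?_)).symm
  refine ⟨v * q - q ^ (k + 2) * q ^ k + q ^ (k + 1) * (-1) ^ (k + 1) - (-1) ^ (k + 1) * q ^ k, ?_⟩
  push_cast
  linear_combination -hv + hsign

/-- Here `T` is the number of planes of PG(r,q²) through a line and `s` the number of points of the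
variety on that line: on average such a plane has less than `q ^ 3 + 1` further points. -/
theorem quasiHermitian_size_lt {s T : ℕ} (hq : 1 < q) (hr : 2 ≤ r)
    (hv : (v : ℤ) * ((q : ℤ) ^ 2 - 1) = ((q : ℤ) ^ (r + 1) + (-1) ^ r) * ((q : ℤ) ^ r - (-1) ^ r))
    (hT : (q ^ 2) ^ 2 * (T * (q ^ 2 - 1) + 1) = (q ^ 2) ^ (r + 1)) (hs : 1 ≤ s) :
    v < T * (q ^ 3 + 1) + s := by
  zify [Nat.one_le_pow 2 q hq.le] at hq hs hT ⊢
  have hqr : (q : ℤ) ^ 2 ≤ q ^ r := pow_le_pow_right₀ hq.le hr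
  have hqr' : Odd r → (q : ℤ) ^ 3 ≤ q ^ r := fun hodd =>
    pow_le_pow_right₀ hq.le (by obtain ⟨k, rfl⟩ := hodd; omega)
  have hsign : ((-1 : ℤ) ^ r) ^ 2 = 1 := by rw [← pow_mul, mul_comm, pow_mul]; simp
  have hplanes : (q : ℤ) ^ 2 * (T * (q ^ 2 - 1) + 1) = (q ^ r) ^ 2 :=
    mul_left_cancel₀ (pow_ne_zero 2 (by omega : (q : ℤ) ≠ 0))
      (by linear_combination hT)
  have hfactor : 0 < (q : ℤ) ^ 2 * (q ^ 2 - 1) := by positivity [one_lt_pow₀ hq two_ne_zero]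
  have hexcess : (q : ℤ) ^ 2 * (q ^ 2 - 1) * (T * (q ^ 3 + 1) + s - v) =
      (q ^ r) ^ 2 - q ^ 5 + (-1) ^ r * (q ^ 2 * (q - 1) * q ^ r) + s * (q ^ 2 * (q ^ 2 - 1)) := by
    linear_combination (q ^ 3 + 1 : ℤ) * hplanes - (q : ℤ) ^ 2 * hv + (q : ℤ) ^ 2 * hsign
  refine sub_pos.1 (pos_of_mul_pos_right (a := (q : ℤ) ^ 2 * (q ^ 2 - 1)) ?_ hfactor.le)
  have hs' : 0 < s * ((q : ℤ) ^ 2 * (q ^ 2 - 1)) := by positivity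
  rw [hexcess]
  rcases r.even_or_odd with heven | hodd
  · rw [heven.neg_one_pow]
    have hsquare : ((q : ℤ) ^ 2) ^ 2 ≤ (q ^ r) ^ 2 := by gcongr
    have hlinear : (q : ℤ) ^ 2 * (q - 1) * q ^ 2 ≤ q ^ 2 * (q - 1) * q ^ r :=
      mul_le_mul_of_nonneg_left hqr (mul_nonneg (by positivity) (by omega))
    linarith
  · rw [hodd.neg_one_pow]
    have hprod : (q : ℤ) ^ 3 * q ^ 2 ≤ q ^ r * (q ^ r - q ^ 3 + q ^ 2) :=
      mul_le_mul (hqr' hodd) (by linarith [hqr' hodd]) (by positivity) (by positivity)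
    linarith

variable {F : Type} [Field F] [Fintype F] {V : Set (ProjPoint F (r + 1))}

theorem exists_plane_secant_le (hq : 1 < q) (hr : 2 ≤ r) (hF : Fintype.card F = q ^ 2)
    (hV : (V.ncard : ℤ) * ((q : ℤ) ^ 2 - 1) =
      ((q : ℤ) ^ (r + 1) + (-1) ^ r) * ((q : ℤ) ^ r - (-1) ^ r))
    {l : Submodule F (Fin (r + 1) → F)} (hl : finrank F l = 2) (hs : 1 ≤ secant F (r + 1) V l) :
    ∃ W, l ≤ W ∧ finrank F W = 3 ∧ secant F (r + 1) V W ≤ q ^ 3 + secant F (r + 1) V l := by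
  have hplanes := pow_finrank_mul_card_subspacesAbove l
  rw [hl, hF] at hplanes
  obtain ⟨W, hW, hWV⟩ :=
    exists_mem_subspacesAbove_secant_le (quasiHermitian_size_lt hq hr hV hplanes hs)
  obtain ⟨hlW, hrank⟩ := mem_subspacesAbove.1 hW
  exact ⟨W, hlW, by rw [hrank, hl], hWV⟩

end QuasiHermitianSize

section IntersectionNumbers

open Finset
open scoped Classical

theorem le_or_le_of_mul_le {p s : ℕ} (hp : 5 ≤ p) (hmod : s ≡ 1 [MOD p]) (hs : s ≤ p ^ 4 + 1)
    (hmul : s * (p ^ 4 + 1 - s) ≤ p ^ 6 + s) : s ≤ p ^ 2 + 1 ∨ p ^ 4 + 1 ≤ s + p ^ 2 := by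
  by_contra! ⟨hlong, hshort⟩
  have hlong' : p ^ 2 + 1 + p ≤ s := by
    refine Nat.ModEq.add_le_of_lt (.trans ?_ hmod.symm) hlong
    exact ((Nat.modEq_iff_dvd' (by omega)).2 (by simp [sq])).symm
  have hshort' : s + p ^ 2 + p ≤ p ^ 4 + 1 := by
    refine Nat.ModEq.add_le_of_lt ((hmod.add_right _).trans ?_) hshort
    simp [Nat.ModEq, Nat.add_mod, Nat.pow_mod]
  zify [hs] at *
  have hprod := mul_nonneg (sub_nonneg.2 hlong') (sub_nonneg.2 hshort')
  have h5 : 5 * (p : ℤ) ^ 4 ≤ p ^ 5 := by nlinarith [pow_pos (by omega : (0 : ℤ) < p) 4]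
  nlinarith

variable {p n : ℕ} [Fact p.Prime] {F : Type} [Field F] [Fintype F] {V : Set (ProjPoint F n)}

theorem secant_line_le_or_le (hp : 5 ≤ p) (hF : Fintype.card F = p ^ 4)
    (hcode : charVec F p n V ∈ hypCode F p n) {l W : Submodule F (Fin n → F)}
    (hl : finrank F l = 2) (hmod : secant F n V l ≡ 1 [MOD p]) (hW : finrank F W = 3) (hlW : l ≤ W)
    (hWV : secant F n V W ≤ p ^ 6 + secant F n V l) :
    secant F n V l ≤ p ^ 2 + 1 ∨ p ^ 4 + 1 ≤ secant F n V l + p ^ 2 := by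
  have : CharP F p := charP_of_card_eq_prime_pow hF
  have hle := secant_le_ncard_pointsIn V l
  rw [ncard_pointsIn_line hl, hF] at hle
  have hmul := secant_support_mul_le hcode hl hW hlW
  have hsupp : Function.support (charVec F p n V) = V := by
    simp [charVec, Set.support_indicator]
  rw [hsupp, hF] at hmul
  exact le_or_le_of_mul_le hp hmod hle (hmul.trans hWV)

theorem secant_line_le_or_le_of_forall (hp : 5 ≤ p) (hF : Fintype.card F = p ^ 4)
    (hcode : charVec F p n V ∈ hypCode F p n)
    (hmod : ∀ l : Submodule F (Fin n → F), finrank F l = 2 → secant F n V l ≡ 1 [MOD p])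
    (hplane : ∀ l : Submodule F (Fin n → F), finrank F l = 2 →
      ∃ W, l ≤ W ∧ finrank F W = 3 ∧ secant F n V W ≤ p ^ 6 + secant F n V l)
    {l : Submodule F (Fin n → F)} (hl : finrank F l = 2) :
    secant F n V l ≤ p ^ 2 + 1 ∨ p ^ 4 + 1 ≤ secant F n V l + p := by
  have : CharP F p := charP_of_card_eq_prime_pow hF
  have hgap : ∀ m : Submodule F (Fin n → F), finrank F m = 2 →
      secant F n V m ≤ p ^ 2 + 1 ∨ p ^ 4 + 1 ≤ secant F n V m + p ^ 2 := fun m hm =>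
    let ⟨_, hmW, hW, hWV⟩ := hplane m hm
    secant_line_le_or_le hp hF hcode hm (hmod m hm) hW hmW hWV
  refine (hgap l hl).imp_right fun hlong => ?_
  obtain ⟨W, hlW, hW, hWV⟩ := hplane l hl
  have : Fact (finrank F W = 3) := ⟨hW⟩
  have hlt := lt_lineCard_add_of_mem_longLines (L := PlaneLine W) (B := planeTrace W V)
    (l₀ := ⟨l, hlW, hl⟩) hp ((order_plane W).trans hF) isLineCode_planeCode
    (by convert planeTrace_mem_planeCode hcode)
    (fun m => by rw [lineCard_planeTrace]; exact hmod m.1 m.2.2)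
    (fun m => by rw [lineCard_planeTrace]; exact hgap m.1 m.2.2)
    (by rw [mem_longLines, order_plane, hF, lineCard_planeTrace]; exact hlong)
    (by rw [lineCard_planeTrace, card_planeTrace]; exact hWV)
  rw [lineCard_planeTrace] at hlt
  have hmod' : p ^ 4 + 1 ≡ secant F n V l + 2 * p [MOD p] := by
    refine Nat.ModEq.trans ?_ ((hmod l hl).symm.trans ?_) <;>
      simp [Nat.ModEq, Nat.add_mod, Nat.pow_mod]
  have := hmod'.add_le_of_lt hlt
  omega

end IntersectionNumbers

section PlaneBounds

theorem le_or_le_of_quadratic_nonneg {p m : ℤ} (hp : 5 ≤ p)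
    (hm : 0 ≤ m * (m + p ^ 4) - ((p ^ 2 + 1) + (p ^ 4 + 1 - p)) * (m * (p ^ 4 + 1)) +
      (p ^ 2 + 1) * (p ^ 4 + 1 - p) * ((p ^ 4) ^ 2 + p ^ 4 + 1)) :
    m ≤ p ^ 6 + 2 * p ^ 4 - p ^ 2 - p + 1 ∨ p ^ 8 - p ^ 5 + p ^ 4 - p + 1 ≤ m := by
  by_contra! ⟨hlow, hhigh⟩
  set M := p ^ 8 - p ^ 5 + p ^ 4 - p with hM
  have hprod : 0 ≤ (m - (p ^ 6 + 2 * p ^ 4 - p ^ 2 - p + 2)) * (M - m) :=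
    mul_nonneg (by omega) (by omega)
  have hslope : 0 ≤ (p ^ 4 - 2 * p ^ 2 - p) * (M - m) :=
    mul_nonneg (by nlinarith [mul_le_mul hp hp (by norm_num) (by omega)]) (by omega)
  have hneg : M * (M + p ^ 4) - ((p ^ 2 + 1) + (p ^ 4 + 1 - p)) * (M * (p ^ 4 + 1)) +
      (p ^ 2 + 1) * (p ^ 4 + 1 - p) * ((p ^ 4) ^ 2 + p ^ 4 + 1) < 0 := by
    obtain ⟨x, rfl⟩ : ∃ x, p = x + 5 := ⟨p - 5, by ring⟩
    have : 0 ≤ x := by omega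
    rw [← neg_pos, hM]
    ring_nf
    positivity
  have hsplit : m * (m + p ^ 4) - ((p ^ 2 + 1) + (p ^ 4 + 1 - p)) * (m * (p ^ 4 + 1)) +
      (p ^ 2 + 1) * (p ^ 4 + 1 - p) * ((p ^ 4) ^ 2 + p ^ 4 + 1) =
      (M * (M + p ^ 4) - ((p ^ 2 + 1) + (p ^ 4 + 1 - p)) * (M * (p ^ 4 + 1)) +
        (p ^ 2 + 1) * (p ^ 4 + 1 - p) * ((p ^ 4) ^ 2 + p ^ 4 + 1)) -
      (m - (p ^ 6 + 2 * p ^ 4 - p ^ 2 - p + 2)) * (M - m) -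
      (p ^ 4 - 2 * p ^ 2 - p) * (M - m) := by
    rw [hM]
    ring
  linarith [hsplit]

variable {p n : ℕ} {F : Type} [Field F] [Fintype F] {V : Set (ProjPoint F n)}

theorem secant_plane_le_or_le (hp : 5 ≤ p) (hF : Fintype.card F = p ^ 4)
    (hgap : ∀ l : Submodule F (Fin n → F), finrank F l = 2 →
      secant F n V l ≤ p ^ 2 + 1 ∨ p ^ 4 + 1 ≤ secant F n V l + p)
    {π : Submodule F (Fin n → F)} (hπ : finrank F π = 3) :
    secant F n V π ≤ p ^ 6 + 2 * p ^ 4 - p ^ 2 - p + 1 ∨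
      p ^ 8 - p ^ 5 + p ^ 4 - p + 1 ≤ secant F n V π := by
  have : Fact (finrank F π = 3) := ⟨hπ⟩
  have hp' : (5 : ℤ) ≤ p := by exact_mod_cast hp
  have hbounds_le : (p : ℤ) ^ 2 + 1 ≤ p ^ 4 + 1 - p := by
    nlinarith [mul_le_mul hp' hp' (by norm_num) (by omega)]
  have hquad := quadratic_nonneg_of_lineCard_gap (L := PlaneLine π) (B := planeTrace π V)
    hbounds_le fun l => by
      rw [lineCard_planeTrace]
      refine (hgap l.1 l.2.2).imp (fun h => by exact_mod_cast h) fun h => ?_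
      zify at h
      linarith
  rw [card_planeTrace, order_plane, hF] at hquad
  push_cast at hquad
  have hle : p ≤ p ^ 4 := Nat.le_self_pow four_ne_zero p
  have hsq : p ^ 2 ≤ p ^ 4 := Nat.pow_le_pow_right (by omega) (by norm_num)
  have hpow : p ^ 5 ≤ p ^ 8 := Nat.pow_le_pow_right (by omega) (by norm_num)
  have hbounds := le_or_le_of_quadratic_nonneg hp' hquad
  simp only [← Nat.cast_pow] at hbounds
  omega

end PlaneBounds

theorem stmt16_general (p r : ℕ) (hp : p.Prime) (hp3 : 3 < p) (F : Type) [Field F] [Fintype F]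
    (hF : Fintype.card F = p ^ 4) (V : Set (ProjPoint F (r + 1)))
    (hV : (V.ncard : ℤ) * (((p ^ 2 : ℕ) : ℤ) ^ 2 - 1) =
      (((p ^ 2 : ℕ) : ℤ) ^ (r + 1) + (-1) ^ r) * (((p ^ 2 : ℕ) : ℤ) ^ r - (-1) ^ r))
    (hcode : charVec F p (r + 1) V ∈ hypCode F p (r + 1)) :
    ∀ π : Submodule F (Fin (r + 1) → F), finrank F π = 3 →
      secant F (r + 1) V π ≤ p ^ 6 + 2 * p ^ 4 - p ^ 2 - p + 1 ∨
      p ^ 8 - p ^ 5 + p ^ 4 - p + 1 ≤ secant F (r + 1) V π := by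
  intro π hπ
  have : Fact p.Prime := ⟨hp⟩
  have hp5 : 5 ≤ p := hp.five_le_of_ne_two_of_ne_three (by omega) (by omega)
  have hr : 2 ≤ r := by
    have := π.finrank_le
    rw [hπ, finrank_fin_fun] at this
    omega
  have hncard : V.ncard ≡ 1 [MOD p] :=
    (modEq_one_of_quasiHermitian_size (by omega) hV).of_dvd (dvd_pow_self p two_ne_zero)
  have hmod : ∀ l : Submodule F (Fin (r + 1) → F), finrank F l = 2 →
      secant F (r + 1) V l ≡ 1 [MOD p] := fun l hl =>
    (secant_modEq_ncard (hF ▸ dvd_pow_self p four_ne_zero) hcode hl.ge).trans hncard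
  have hplane : ∀ l : Submodule F (Fin (r + 1) → F), finrank F l = 2 →
      ∃ W, l ≤ W ∧ finrank F W = 3 ∧
        secant F (r + 1) V W ≤ p ^ 6 + secant F (r + 1) V l := fun l hl => by
    have hpos : 1 ≤ secant F (r + 1) V l := Nat.one_le_iff_ne_zero.2 fun h0 => by
      have := hmod l hl
      rw [h0] at this
      exact hp.one_lt.ne' (Nat.dvd_one.1 (Nat.modEq_zero_iff_dvd.1 this.symm))
    simpa only [← pow_mul] using
      exists_plane_secant_le (Nat.one_lt_pow two_ne_zero hp.one_lt) hr (by rw [hF, ← pow_mul])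
        hV hl hpos
  exact secant_plane_le_or_le hp5 hF
    (fun l => secant_line_le_or_le_of_forall hp5 hF hcode hmod hplane) hπ

/-- in PG(r, p⁴) (so `q = p²`), every plane meets `V` in at most
`p⁶ + 2p⁴ - p² - p + 1` or at least `p⁸ - p⁵ + p⁴ - p + 1` points. -/
theorem stmt16 (p r : ℕ) (hp : p.Prime) (hp3 : 3 < p) (hr : 4 ≤ r)
    (F : Type) [Field F] [Fintype F] (hF : Fintype.card F = p ^ 4)
    (V : Set (ProjPoint F (r + 1))) (hV : IsQuasiHermitian F (p ^ 2) r V)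
    (hcode : charVec F p (r + 1) V ∈ hypCode F p (r + 1)) :
    ∀ π : Submodule F (Fin (r + 1) → F), finrank F π = 3 →
      secant F (r + 1) V π ≤ p ^ 6 + 2 * p ^ 4 - p ^ 2 - p + 1 ∨
      p ^ 8 - p ^ 5 + p ^ 4 - p + 1 ≤ secant F (r + 1) V π :=
  stmt16_general p r hp hp3 F hF V hV.1 hcode
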